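/- Let α ≥ 0 and u ∈ C_0^∞(ℝ³;ℝ³) with spherical-mean decomposition u = ū + v. Setting w(r) = (‖D_r ū‖_ω, ‖Dv‖_ω, ‖div v‖_ω)ᵀ ∈ ℝ³ for r > 0, one has ∫_{ℝ³}(Lu)·(Φu) dx ≥ (1/2)|u(0)|² + c_α ∫_0^∞ r · w(r)ᵀ B₊(α) w(r) dr. -/

import Mathlib

open MeasureTheory Metric Real Filter

noncomputable section

/-- `ℝ³` as Euclidean space. -/
abbrev E3 : Type := EuclideanSpace ℝ (Fin 3)

/-- Partial derivative `∂ᵢ f` on `ℝ³`. -/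
def pd (i : Fin 3) (f : E3 → ℝ) (x : E3) : ℝ :=
  fderiv ℝ f x (EuclideanSpace.single i 1)

/-- Laplacian on `ℝ³`. -/
def lap (f : E3 → ℝ) (x : E3) : ℝ := ∑ i, pd i (pd i f) x

/-- Divergence of a vector field on `ℝ³`. -/
def divg (u : E3 → Fin 3 → ℝ) (x : E3) : ℝ := ∑ k, pd k (fun y => u y k) x

/-- The 3D Lamé operator `(Lu)ᵢ = -Δuᵢ - α ∂ᵢ (div u)`. -/
def lame (α : ℝ) (u : E3 → Fin 3 → ℝ) (x : E3) (i : Fin 3) : ℝ :=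
  - lap (fun y => u y i) x - α * pd i (divg u) x

/-- The constant `c_α = (α+2)/(8π(α+1))`. -/
def cA (α : ℝ) : ℝ := (α + 2) / (8 * Real.pi * (α + 1))

/-- The fundamental matrix `Φ` of the 3D Lamé system:
`Φ_ij(x) = c_α |x|⁻¹ (δ_ij + (α/(α+2)) xᵢxⱼ/|x|²)`. -/
def Phi (α : ℝ) (x : E3) (i j : Fin 3) : ℝ :=
  cA α * ‖x‖⁻¹ * ((if i = j then (1 : ℝ) else 0) + (α / (α + 2)) * (x i * x j) / ‖x‖ ^ 2)

/-- `u ∈ C₀^∞(U; ℝ³)`: smooth, compactly supported, with support inside `U`. -/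
def IsTestOn (U : Set E3) (u : E3 → Fin 3 → ℝ) : Prop :=
  ContDiff ℝ (⊤ : ℕ∞) u ∧ HasCompactSupport u ∧ tsupport u ⊆ U

/-- `∫_{ℝ³} (Lu)·(Φ(·-y) u) dx`. -/
def lameEnergy (α : ℝ) (u : E3 → Fin 3 → ℝ) (y : E3) : ℝ :=
  ∫ x : E3, ∑ i, ∑ j, lame α u x i * Phi α (x - y) i j * u x j

/-- The surface measure on the unit sphere `S² ⊂ ℝ³` (total mass `4π`). -/
def sphMeas : Measure (sphere (0 : E3) 1) := volume.toSphere

/-- `∫_{S²} f(rω) dσ(ω)`. -/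
def sphInt (f : E3 → ℝ) (r : ℝ) : ℝ := ∫ ω : sphere (0 : E3) 1, f (r • (ω : E3)) ∂sphMeas

/-- `(ū, v)` is the spherical-mean decomposition of `u`:
`ūᵢ(r) = (1/(4π)) ∫_{S²} uᵢ(rω) dσ(ω)` and `uᵢ(x) = ūᵢ(|x|) + vᵢ(x)`. -/
def IsSphericalMeanDecomp (u : E3 → Fin 3 → ℝ) (ub : Fin 3 → ℝ → ℝ)
    (v : E3 → Fin 3 → ℝ) : Prop :=
  (∀ i r, ub i r = (1 / (4 * Real.pi)) * sphInt (fun x => u x i) r) ∧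
  (∀ x i, u x i = ub i ‖x‖ + v x i)

/-- The matrix `B₊(α)`. -/
def Bplus (α : ℝ) : Matrix (Fin 3) (Fin 3) ℝ :=
  !![1 + (α / 3) * ((2 * α + 3) / (α + 2)), -(α / (2 * Real.sqrt 3)),
       -(α / (2 * Real.sqrt 3)) * ((3 * α + 4) / (α + 2));
     -(α / (2 * Real.sqrt 3)), 1 - (1 / Real.sqrt 2) * (α / (α + 2)),
       -(α / 2) * ((α + (Real.sqrt 2)⁻¹) / (α + 2));
     -(α / (2 * Real.sqrt 3)) * ((3 * α + 4) / (α + 2)),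
       -(α / 2) * ((α + (Real.sqrt 2)⁻¹) / (α + 2)), α]

/-!
Write `β = α/(α+2)`, `ω = x/|x|` and `c = c_α`. Integration by parts against the singular kernel
removes the second derivatives and gives

  `∫ (Lu)·(Φu) = c (∫ |x|⁻¹ Q(∇u) - β ∫ |x|⁻² ((u·ω) div u - (u·∇)u·ω) - ∫ |x|⁻² R)`,

where `Q` is a quadratic form depending on `ω` and `R` is the radial derivative of
`½(|u|² + 3β(u·ω)²)`. Along each ray the last term is the integral of an exact derivative, and its
boundary value at the origin gives `½|u(0)|²`. In the middle term the undifferentiated `u` may be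
replaced by `v = u - ū`, because up to a divergence the integrand is symmetric in the two
occurrences of `u`, and it vanishes when the differentiated field is radial.

It remains to compare integrands on each sphere `|x| = r`. There `∇u = M + ω ⊗ A` with `M = ∇v`
and `A = D_r ū` constant on the sphere. In the expansion of `Q(∇u)` the term `2 A·(Mᵀω)` integrates
to zero, because `Mᵀω` is the radial derivative of `v`, one has `∫ (A·ω)² = (4π/3)|A|²`, and the
mixed terms are bounded by the Cauchy-Schwarz inequality; this gives the entries of `B₊` except for
the multiples of `1/√2`. Those come from the middle term and the Poincaré inequality
`‖v‖ ≤ (r/√2)‖∇v‖` on the sphere.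

The Poincaré inequality on the sphere is the Gaussian Poincaré inequality for the `1`-homogeneous
extension of the function, and the latter follows by differentiating `f(cos θ x + sin θ y)` in `θ`
for independent Gaussian points `x` and `y`, since the law of `(x, y)` is invariant under rotation.
-/

/-! ### Polar coordinates -/

section Polar

variable {F : Type*} [NormedAddCommGroup F] [NormedSpace ℝ F]

lemma integral_volumeIoiPow (n : ℕ) (f : ℝ → F) :
    ∫ y : Set.Ioi (0 : ℝ), f y ∂(Measure.volumeIoiPow n) = ∫ r in Set.Ioi 0, r ^ n • f r := by
  simp only [Measure.volumeIoiPow, ENNReal.ofReal]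
  rw [integral_withDensity_eq_integral_smul (by fun_prop),
    integral_subtype_comap measurableSet_Ioi fun r ↦ Real.toNNReal (r ^ n) • f r]
  refine setIntegral_congr_fun measurableSet_Ioi fun r hr ↦ ?_
  simp only [NNReal.smul_def, Real.coe_toNNReal _ (pow_nonneg hr.out.le _)]

lemma integrable_volumeIoiPow_iff (n : ℕ) (f : ℝ → F) :
    Integrable (fun y : Set.Ioi (0 : ℝ) => f y) (Measure.volumeIoiPow n) ↔
      IntegrableOn (fun r => r ^ n • f r) (Set.Ioi 0) := by
  rw [integrableOn_iff_comap_subtypeVal measurableSet_Ioi, Measure.volumeIoiPow,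
    integrable_withDensity_iff_integrable_smul' (by fun_prop) (by simp)]
  refine integrable_congr (.of_forall fun r => ?_)
  simp only [ENNReal.toReal_ofReal (pow_nonneg r.2.out.le _), Function.comp_apply]

lemma polar_apply_homeomorphUnitSphereProd {E : Type*} [NormedAddCommGroup E] [NormedSpace ℝ E]
    {X : Type*} (g : E → X) (x : ({0}ᶜ : Set E)) :
    g ((homeomorphUnitSphereProd E x).2.1 • (homeomorphUnitSphereProd E x).1.1) = g x := by
  simp [smul_smul, norm_ne_zero_iff.2 x.2]

variable {E : Type*} [NormedAddCommGroup E] [NormedSpace ℝ E] [FiniteDimensional ℝ E]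
  [Nontrivial E] [MeasurableSpace E] [BorelSpace E] (μ : Measure E) [μ.IsAddHaarMeasure]

lemma integral_eq_integral_sphere_prod (g : E → F) :
    ∫ x, g x ∂μ = ∫ p : sphere (0 : E) 1 × Set.Ioi (0 : ℝ), g (p.2.1 • p.1.1)
      ∂(μ.toSphere.prod (Measure.volumeIoiPow (Module.finrank ℝ E - 1))) := by
  rw [← μ.measurePreserving_homeomorphUnitSphereProd.integral_comp
      (Homeomorph.measurableEmbedding _)]
  simp_rw [polar_apply_homeomorphUnitSphereProd g]
  rw [integral_subtype_comap (measurableSet_singleton _).compl g, restrict_compl_singleton]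

omit [NormedSpace ℝ F] in
lemma integrable_iff_integrable_sphere_prod (g : E → F) :
    Integrable g μ ↔ Integrable (fun p : sphere (0 : E) 1 × Set.Ioi (0 : ℝ) => g (p.2.1 • p.1.1))
      (μ.toSphere.prod (Measure.volumeIoiPow (Module.finrank ℝ E - 1))) := by
  rw [← μ.measurePreserving_homeomorphUnitSphereProd.integrable_comp_emb
    (Homeomorph.measurableEmbedding _)]
  simp only [Function.comp_def, polar_apply_homeomorphUnitSphereProd g]
  rw [← Function.comp_def g, ← integrableOn_iff_comap_subtypeVal (measurableSet_singleton _).compl,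
    IntegrableOn, restrict_compl_singleton]

variable {μ}

lemma integrableOn_Ioi_integral_sphere {g : E → F} (hg : Integrable g μ) :
    IntegrableOn (fun r : ℝ => r ^ (Module.finrank ℝ E - 1) •
      ∫ ω : sphere (0 : E) 1, g (r • ω.1) ∂μ.toSphere) (Set.Ioi 0) :=
  (integrable_volumeIoiPow_iff _ _).1
    ((integrable_iff_integrable_sphere_prod μ g).1 hg).integral_prod_right

lemma integral_eq_integral_Ioi_sphere {g : E → F} (hg : Integrable g μ) :
    ∫ x, g x ∂μ = ∫ r in Set.Ioi (0 : ℝ), r ^ (Module.finrank ℝ E - 1) •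
      ∫ ω : sphere (0 : E) 1, g (r • ω.1) ∂μ.toSphere := by
  rw [integral_eq_integral_sphere_prod, integral_prod_symm _
    ((integrable_iff_integrable_sphere_prod μ g).1 hg)]
  exact integral_volumeIoiPow _ fun r => ∫ ω : sphere (0 : E) 1, g (r • ω.1) ∂μ.toSphere

lemma integral_eq_integral_sphere_Ioi {g : E → F} (hg : Integrable g μ) :
    ∫ x, g x ∂μ = ∫ ω : sphere (0 : E) 1, (∫ r in Set.Ioi (0 : ℝ),
      r ^ (Module.finrank ℝ E - 1) • g (r • ω.1)) ∂μ.toSphere := by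
  rw [integral_eq_integral_sphere_prod, integral_prod _
    ((integrable_iff_integrable_sphere_prod μ g).1 hg)]
  exact integral_congr_ae (.of_forall fun ω => integral_volumeIoiPow _ fun r => g (r • ω.1))

end Polar

section PolarReal

variable {E : Type*} [NormedAddCommGroup E] [NormedSpace ℝ E] [FiniteDimensional ℝ E] [Nontrivial E]
  [MeasurableSpace E] [BorelSpace E] {μ : Measure E} {k : ℕ} {g : E → ℝ}

omit [FiniteDimensional ℝ E] [Nontrivial E] [BorelSpace E] in
lemma pow_smul_integral_sphere_norm_inv_pow_mul (hk : k ≤ Module.finrank ℝ E - 1) {r : ℝ}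
    (hr : 0 < r) :
    r ^ (Module.finrank ℝ E - 1) • ∫ ω : sphere (0 : E) 1,
        ‖r • ω.1‖⁻¹ ^ k * g (r • ω.1) ∂μ.toSphere =
      r ^ (Module.finrank ℝ E - 1 - k) * ∫ ω : sphere (0 : E) 1, g (r • ω.1) ∂μ.toSphere := by
  simp only [norm_smul, norm_eq_of_mem_sphere, mul_one, norm_of_nonneg hr.le, smul_eq_mul]
  rw [integral_const_mul, ← mul_assoc, inv_pow, pow_sub₀ _ hr.ne' hk]

variable [μ.IsAddHaarMeasure]

lemma integrableOn_Ioi_integral_sphere_of_norm_inv_pow_mul (hk : k ≤ Module.finrank ℝ E - 1)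
    (hg : Integrable (fun x => ‖x‖⁻¹ ^ k * g x) μ) :
    IntegrableOn (fun r : ℝ => r ^ (Module.finrank ℝ E - 1 - k) *
      ∫ ω : sphere (0 : E) 1, g (r • ω.1) ∂μ.toSphere) (Set.Ioi 0) :=
  (integrableOn_Ioi_integral_sphere hg).congr_fun
    (fun _ hr => pow_smul_integral_sphere_norm_inv_pow_mul hk hr) measurableSet_Ioi

lemma integral_norm_inv_pow_mul (hk : k ≤ Module.finrank ℝ E - 1)
    (hg : Integrable (fun x => ‖x‖⁻¹ ^ k * g x) μ) :
    ∫ x, ‖x‖⁻¹ ^ k * g x ∂μ = ∫ r in Set.Ioi (0 : ℝ), r ^ (Module.finrank ℝ E - 1 - k) *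
      ∫ ω : sphere (0 : E) 1, g (r • ω.1) ∂μ.toSphere := by
  rw [integral_eq_integral_Ioi_sphere hg]
  exact setIntegral_congr_fun measurableSet_Ioi
    fun _ hr => pow_smul_integral_sphere_norm_inv_pow_mul hk hr

end PolarReal

/-! ### The standard Gaussian measure -/

section Gaussian

open ProbabilityTheory Module

/-- The density of the standard Gaussian measure in dimension `n`, as a function of the norm. -/
def gaussianProfile (n : ℕ) (r : ℝ) : ℝ := (2 * π) ^ (-(n : ℝ) / 2) * exp (-(1 / 2) * r ^ 2)

lemma gaussianProfile_pos (n : ℕ) (r : ℝ) : 0 < gaussianProfile n r := by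
  unfold gaussianProfile; positivity

variable {E : Type*} [NormedAddCommGroup E] [InnerProductSpace ℝ E] [FiniteDimensional ℝ E]
  [MeasurableSpace E] [BorelSpace E]

lemma integrable_gaussianProfile_norm :
    Integrable (fun x : E => gaussianProfile (finrank ℝ E) ‖x‖) := by
  have h := (GaussianFourier.integrable_cexp_neg_mul_sq_norm_add (V := E) (b := 1 / 2)
    (by norm_num) 0 0).norm.const_mul ((2 * π) ^ (-(finrank ℝ E : ℝ) / 2))
  refine h.congr (.of_forall fun x => ?_)
  simp [gaussianProfile, Complex.norm_exp, ← Complex.ofReal_pow]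

lemma integral_gaussianProfile_norm_smul_cexp (t : E) :
    ∫ x : E, gaussianProfile (finrank ℝ E) ‖x‖ • Complex.exp (inner ℝ x t * Complex.I)
      = Complex.exp (-‖t‖ ^ 2 / 2) := by
  have key := GaussianFourier.integral_cexp_neg_mul_sq_norm_add (V := E) (b := 1 / 2) (by norm_num)
    Complex.I t
  have hpi : ((2 * π : ℝ) : ℂ) ≠ 0 := by exact_mod_cast (by positivity : 2 * π ≠ 0)
  calc _ = ∫ x : E, ((2 * π : ℝ) : ℂ) ^ (-(finrank ℝ E : ℂ) / 2)
        * Complex.exp (-(1 / 2) * ‖x‖ ^ 2 + Complex.I * inner ℝ t x) := by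
        congr with x
        rw [gaussianProfile, Complex.real_smul, real_inner_comm, Complex.exp_add]
        push_cast [Complex.ofReal_cpow (by positivity : 0 ≤ 2 * π)]
        ring_nf
    _ = _ := by
        rw [integral_const_mul, key, show (π : ℂ) / (1 / 2) = ((2 * π : ℝ) : ℂ) by push_cast; ring,
          ← mul_assoc, ← Complex.cpow_add _ _ hpi, neg_div, neg_add_cancel, Complex.cpow_zero,
          one_mul, Complex.I_sq]
        ring_nf

variable (E) in
lemma stdGaussian_eq_withDensity :
    stdGaussian E = volume.withDensity
      fun x => ENNReal.ofReal (gaussianProfile (finrank ℝ E) ‖x‖) := by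
  have := isFiniteMeasure_withDensity_ofReal (integrable_gaussianProfile_norm (E := E)).2
  refine Measure.ext_of_charFun (funext fun t => ?_)
  rw [charFun_stdGaussian, charFun_apply, integral_withDensity_eq_integral_toReal_smul
    (by unfold gaussianProfile; fun_prop) (by simp)]
  simp only [ENNReal.toReal_ofReal (gaussianProfile_pos _ _).le,
    integral_gaussianProfile_norm_smul_cexp]

lemma integral_stdGaussian_eq {F : Type*} [NormedAddCommGroup F] [NormedSpace ℝ F] (f : E → F) :
    ∫ x, f x ∂(stdGaussian E) = ∫ x, gaussianProfile (finrank ℝ E) ‖x‖ • f x := by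
  rw [stdGaussian_eq_withDensity, integral_withDensity_eq_integral_toReal_smul
    (by unfold gaussianProfile; fun_prop) (by simp)]
  simp only [ENNReal.toReal_ofReal (gaussianProfile_pos _ _).le]

lemma integrable_stdGaussian_iff (f : E → ℝ) :
    Integrable f (stdGaussian E) ↔
      Integrable (fun x => f x * gaussianProfile (finrank ℝ E) ‖x‖) := by
  rw [stdGaussian_eq_withDensity, integrable_withDensity_iff
    (by unfold gaussianProfile; fun_prop) (by simp)]
  simp only [ENNReal.toReal_ofReal (gaussianProfile_pos _ _).le]

variable [Nontrivial E]

lemma measureReal_toSphere_univ_pos : 0 < (volume : Measure E).toSphere.real Set.univ := by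
  refine measureReal_nonneg.lt_of_ne' ?_
  rw [ne_eq, measureReal_eq_zero_iff, Measure.measure_univ_eq_zero]
  exact Measure.toSphere_ne_zero _

/-- Under the standard Gaussian measure `‖x‖` and `x / ‖x‖` are independent, and the latter is
uniform on the sphere. -/
lemma integral_stdGaussian_of_homogeneous {f : E → ℝ} {k : ℕ}
    (hf : ∀ (r : ℝ) (x : E), 0 < r → f (r • x) = r ^ k * f x) :
    ∫ x, f x ∂(stdGaussian E) = (∫ x : E, ‖x‖ ^ k ∂(stdGaussian E))
      * ⨍ ω : sphere (0 : E) 1, f ω ∂(volume : Measure E).toSphere := by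
  have polar : ∀ g : E → ℝ, (∀ (r : ℝ) (x : E), 0 < r → g (r • x) = r ^ k * g x) →
      ∫ x, g x ∂(stdGaussian E) = (∫ ω : sphere (0 : E) 1, g ω ∂(volume : Measure E).toSphere)
        * ∫ r : Set.Ioi (0 : ℝ), gaussianProfile (finrank ℝ E) r * r.1 ^ k
          ∂Measure.volumeIoiPow (finrank ℝ E - 1) := by
    intro g hg
    rw [integral_stdGaussian_eq, integral_eq_integral_sphere_prod, ← integral_prod_mul]
    refine integral_congr_ae (.of_forall fun p => ?_)
    simp only [hg _ _ p.2.2.out, norm_smul, norm_eq_of_mem_sphere, mul_one, smul_eq_mul,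
      norm_of_nonneg p.2.2.out.le]
    ring
  have hS := (measureReal_toSphere_univ_pos (E := E)).ne'
  rw [polar f hf, polar (fun x => ‖x‖ ^ k) fun r x hr => by
    rw [norm_smul, norm_of_nonneg hr.le, mul_pow], average_eq]
  simp only [norm_eq_of_mem_sphere, one_pow, integral_const, smul_eq_mul, mul_one]
  field_simp

end Gaussian

/-! ### Integrals of derivatives along lines -/

section Line

instance isFiniteMeasure_restrict_uIoc (a b : ℝ) :
    IsFiniteMeasure (volume.restrict (Set.uIoc a b)) :=
  inferInstanceAs (IsFiniteMeasure (volume.restrict (Set.Ioc (min a b) (max a b))))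

variable {E F : Type*} [NormedAddCommGroup E] [NormedSpace ℝ E] [MeasurableSpace E] [BorelSpace E]
  [SecondCountableTopology E] [NormedAddCommGroup F] [NormedSpace ℝ F]
  {μ : Measure E} [SFinite μ] [μ.IsAddLeftInvariant] {f f' : E → F}

omit [NormedSpace ℝ F] in
lemma integrable_comp_add_smul_prod (hf : Integrable f μ) (v : E) :
    Integrable (fun p : ℝ × E => f (p.2 + p.1 • v))
      ((volume.restrict (Set.uIoc (0 : ℝ) 1)).prod μ) := by
  have shear : MeasurePreserving (fun p : ℝ × E => (p.1, p.1 • v + p.2))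
      ((volume.restrict (Set.uIoc (0 : ℝ) 1)).prod μ)
      ((volume.restrict (Set.uIoc (0 : ℝ) 1)).prod μ) :=
    (MeasurePreserving.id _).skew_product (by fun_prop)
      (.of_forall fun t => map_add_left_eq_self μ (t • v))
  simpa only [Function.comp_def, add_comm] using
    shear.integrable_comp_of_integrable (hf.comp_snd (volume.restrict (Set.uIoc (0 : ℝ) 1)))

lemma integral_eq_zero_of_ae_line [CompleteSpace F] (v : E) (hf : Integrable f μ)
    (hf' : Integrable f' μ)
    (h : ∀ᵐ x ∂μ, ∫ t in (0 : ℝ)..1, f' (x + t • v) = f (x + v) - f x) :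
    ∫ x, f' x ∂μ = 0 :=
  calc ∫ x, f' x ∂μ = ∫ t in (0 : ℝ)..1, ∫ x, f' (x + t • v) ∂μ := by
        simp [integral_add_right_eq_self]
    _ = ∫ x, (∫ t in (0 : ℝ)..1, f' (x + t • v)) ∂μ :=
        intervalIntegral_integral_swap (integrable_comp_add_smul_prod hf' v)
    _ = ∫ x, (f (x + v) - f x) ∂μ := integral_congr_ae h
    _ = 0 := by
        rw [integral_sub (hf.comp_add_right v) hf, integral_add_right_eq_self f, sub_self]

end Line

section PuncturedSpace

variable {E F : Type*} [NormedAddCommGroup E] [NormedSpace ℝ E] [FiniteDimensional ℝ E]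
  [MeasurableSpace E] [BorelSpace E] [NormedAddCommGroup F] [NormedSpace ℝ F]
  {μ : Measure E} [μ.IsAddHaarMeasure]

lemma ae_forall_add_smul_ne_zero (hE : 1 < Module.finrank ℝ E) (v : E) :
    ∀ᵐ x ∂μ, ∀ t : ℝ, x + t • v ≠ 0 := by
  have span_ne_top : Submodule.span ℝ {v} ≠ ⊤ := fun h => by
    have := finrank_span_le_card (R := ℝ) ({v} : Set E)
    rw [h, finrank_top, Set.toFinset_singleton, Finset.card_singleton] at this
    lia
  filter_upwards [measure_eq_zero_iff_ae_notMem.1 (μ.addHaar_submodule _ span_ne_top)]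
    with x hx t h
  exact hx (Submodule.mem_span_singleton.2 ⟨-t, by rw [neg_smul, ← eq_neg_of_add_eq_zero_left h]⟩)

lemma integral_fderiv_apply_eq_zero [CompleteSpace F] (hE : 1 < Module.finrank ℝ E) {f : E → F}
    (hf : ContDiffOn ℝ 1 f {0}ᶜ) (v : E) (hfi : Integrable f μ)
    (hf' : Integrable (fun x => fderiv ℝ f x v) μ) : ∫ x, fderiv ℝ f x v ∂μ = 0 := by
  refine integral_eq_zero_of_ae_line v hfi hf' ?_
  filter_upwards [ae_forall_add_smul_ne_zero hE v] with x hx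
  have line : ∀ t : ℝ, HasDerivAt (fun t => x + t • v) v t := fun t => by
    simpa using ((hasDerivAt_id t).smul_const v).const_add x
  have deriv_line : ∀ t : ℝ, HasDerivAt (fun t => f (x + t • v)) (fderiv ℝ f (x + t • v) v) t :=
    fun t => (((hf.contDiffAt (isOpen_compl_singleton.mem_nhds (hx t))).differentiableAt
      one_ne_zero).hasFDerivAt.comp_hasDerivAt t (line t))
  have cont : Continuous fun t : ℝ => fderiv ℝ f (x + t • v) v :=
    ((hf.continuousOn_fderiv_of_isOpen isOpen_compl_singleton le_rfl).comp_continuous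
      (by fun_prop) hx).clm_apply continuous_const
  simpa using intervalIntegral.integral_eq_sub_of_hasDerivAt (fun t _ => deriv_line t)
    (cont.intervalIntegrable 0 1)

end PuncturedSpace

/-! ### The Gaussian Poincaré inequality -/

section GaussianPoincare

open ProbabilityTheory Module
open scoped NNReal

variable {E : Type*} [NormedAddCommGroup E] [InnerProductSpace ℝ E] [FiniteDimensional ℝ E]
  [MeasurableSpace E] [BorelSpace E] {f : E → ℝ} {C : ℝ≥0}

lemma memLp_stdGaussian_of_lipschitz (hf : LipschitzWith C f) :
    MemLp f 2 (stdGaussian E) := by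
  have hsub : LipschitzWith C fun x => f x - f 0 :=
    .of_dist_le_mul fun x y => by simpa using hf.dist_le_mul x y
  have h := hsub.comp_memLp (sub_self _)
    (IsGaussian.memLp_id (stdGaussian E) 2 ENNReal.ofNat_ne_top)
  simpa [Pi.add_def, Function.comp_def] using h.add (memLp_const (f 0))

omit [FiniteDimensional ℝ E] [MeasurableSpace E] [BorelSpace E] in
lemma hasDerivAt_gaussianProfile_norm_line (n : ℕ) (x v : E) (t : ℝ) :
    HasDerivAt (fun t : ℝ => gaussianProfile n ‖x + t • v‖)
      (-inner ℝ (x + t • v) v * gaussianProfile n ‖x + t • v‖) t := by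
  have line : HasDerivAt (fun t : ℝ => x + t • v) v t := by
    simpa using ((hasDerivAt_id t).smul_const v).const_add x
  convert! ((line.norm_sq.const_mul (-(1 / 2))).exp).const_mul ((2 * π) ^ (-(n : ℝ) / 2)) using 1
  unfold gaussianProfile
  ring

omit [FiniteDimensional ℝ E] [MeasurableSpace E] [BorelSpace E] in
lemma deriv_line (f : E → ℝ) (x v : E) (t : ℝ) :
    deriv (fun t : ℝ => f (x + t • v)) t = lineDeriv ℝ f (x + t • v) v := by
  simp only [lineDeriv, add_assoc, ← add_smul]
  rw [deriv_comp_const_add (fun s => f (x + s • v)) t 0, add_zero]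

lemma integral_inner_mul_stdGaussian (hf : LipschitzWith C f) (v : E) :
    ∫ x, inner ℝ x v * f x ∂(stdGaussian E) = ∫ x, lineDeriv ℝ f x v ∂(stdGaussian E) := by
  have inner_memLp : MemLp (fun x : E => inner ℝ x v) 2 (stdGaussian E) :=
    (IsGaussian.memLp_id (stdGaussian E) 2 ENNReal.ofNat_ne_top).inner_const v
  have hf_int := memLp_stdGaussian_of_lipschitz hf
  have hD : Integrable (fun x => lineDeriv ℝ f x v) (stdGaussian E) :=
    (hf.memLp_lineDeriv v).integrable le_top
  have hX : Integrable (fun x => inner ℝ x v * f x) (stdGaussian E) :=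
    inner_memLp.integrable_mul hf_int
  rw [← sub_eq_zero, ← neg_eq_zero, neg_sub, ← integral_sub hD hX, integral_stdGaussian_eq]
  simp only [smul_eq_mul, mul_comm (gaussianProfile _ _)]
  refine integral_eq_zero_of_ae_line (f := fun x => f x * gaussianProfile (finrank ℝ E) ‖x‖) v
    ((integrable_stdGaussian_iff _).1 (hf_int.integrable one_le_two))
    ((integrable_stdGaussian_iff _).1 (hD.sub hX)) (.of_forall fun x => ?_)
  have hp : ∀ t : ℝ, HasDerivAt (fun t : ℝ => gaussianProfile (finrank ℝ E) ‖x + t • v‖) _ t :=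
    hasDerivAt_gaussianProfile_norm_line (finrank ℝ E) x v
  have hf_line : LipschitzWith (C * ‖v‖₊) fun t : ℝ => f (x + t • v) :=
    hf.comp (.of_dist_le_mul fun s t => by
      simp [dist_eq_norm, ← sub_smul, norm_smul, mul_comm])
  have ftc := hf_line.lipschitzOnWith.absolutelyContinuousOnInterval.integral_deriv_mul_eq_sub
    (ContDiff.contDiffOn (contDiff_one_iff_deriv.2 ⟨fun t => (hp t).differentiableAt, by
      rw [funext fun t => (hp t).deriv]
      unfold gaussianProfile
      fun_prop⟩)).absolutelyContinuousOnInterval (a := 0) (b := 1)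
  simp only [deriv_line, (hp _).deriv, one_smul, zero_smul, add_zero] at ftc
  rw [← ftc]
  congr with t
  ring

lemma ae_differentiableAt_stdGaussian (hf : LipschitzWith C f) :
    ∀ᵐ x ∂(stdGaussian E), DifferentiableAt ℝ f x := by
  rw [stdGaussian_eq_withDensity]
  exact (withDensity_absolutelyContinuous _ _).ae_le hf.ae_differentiableAt

variable (E) in
lemma measurePreserving_rotation_stdGaussian (θ : ℝ) :
    MeasurePreserving (ContinuousLinearMap.rotation (E := E) θ)
      ((stdGaussian E).prod (stdGaussian E)) ((stdGaussian E).prod (stdGaussian E)) :=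
  ⟨by fun_prop, IsGaussian.map_rotation_eq_self (by simp [integral_id_stdGaussian]) θ⟩

lemma ae_differentiableAt_rotation_fst (hf : LipschitzWith C f) (θ : ℝ) :
    ∀ᵐ p ∂((stdGaussian E).prod (stdGaussian E)),
      DifferentiableAt ℝ f (ContinuousLinearMap.rotation θ p).1 :=
  (measurePreserving_fst.comp
    (measurePreserving_rotation_stdGaussian E θ)).quasiMeasurePreserving.ae
      (ae_differentiableAt_stdGaussian hf)

/-- The derivative in `θ` of `f` along the orbit `θ ↦ cos θ x + sin θ y` of `p = (x, y)`. -/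
def orbitDeriv (f : E → ℝ) (θ : ℝ) (p : E × E) : ℝ :=
  fderiv ℝ f (ContinuousLinearMap.rotation θ p).1 (ContinuousLinearMap.rotation θ p).2

omit [FiniteDimensional ℝ E] [MeasurableSpace E] [BorelSpace E] in
lemma continuous_rotation_apply :
    Continuous fun q : ℝ × E × E => ContinuousLinearMap.rotation q.1 q.2 := by
  simp only [ContinuousLinearMap.rotation_apply]
  fun_prop

lemma measurable_orbitDeriv : Measurable fun q : ℝ × E × E => orbitDeriv f q.1 q.2 :=
  isBoundedBilinearMap_apply.continuous.measurable.comp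
    (((measurable_fderiv ℝ f).comp continuous_rotation_apply.measurable.fst).prodMk
      continuous_rotation_apply.measurable.snd)

omit [FiniteDimensional ℝ E] [MeasurableSpace E] [BorelSpace E] in
lemma abs_orbitDeriv_le (hf : LipschitzWith C f) (θ : ℝ) (p : E × E) :
    |orbitDeriv f θ p| ≤ C * (‖p.1‖ + ‖p.2‖) := by
  have hrot : ‖(ContinuousLinearMap.rotation θ p).2‖ ≤ ‖p.1‖ + ‖p.2‖ := by
    rw [ContinuousLinearMap.rotation_apply]
    refine (norm_add_le _ _).trans (add_le_add ?_ ?_) <;> rw [norm_smul, norm_eq_abs]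
    · rw [abs_neg]
      exact mul_le_of_le_one_left (norm_nonneg _) (abs_sin_le_one θ)
    · exact mul_le_of_le_one_left (norm_nonneg _) (abs_cos_le_one θ)
  exact ((fderiv ℝ f _).le_opNorm _).trans
    (mul_le_mul (norm_fderiv_le_of_lipschitz ℝ hf) hrot (norm_nonneg _) C.2)

lemma ae_integral_orbitDeriv (hf : LipschitzWith C f) :
    ∀ᵐ p ∂((stdGaussian E).prod (stdGaussian E)),
      ∫ θ in (0 : ℝ)..π / 2, orbitDeriv f θ p = f p.2 - f p.1 := by
  have hdiff : ∀ᵐ p ∂((stdGaussian E).prod (stdGaussian E)), ∀ᵐ θ : ℝ,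
      DifferentiableAt ℝ f (ContinuousLinearMap.rotation θ p).1 :=
    (Measure.ae_ae_comm (p := fun θ p => DifferentiableAt ℝ f (ContinuousLinearMap.rotation θ p).1)
      ((measurableSet_of_differentiableAt ℝ f).preimage
      continuous_rotation_apply.measurable.fst)).1
      (.of_forall (ae_differentiableAt_rotation_fst hf))
  filter_upwards [hdiff] with p hp
  have orbit : ∀ θ, HasDerivAt (fun θ => (ContinuousLinearMap.rotation θ p).1)
      (ContinuousLinearMap.rotation θ p).2 θ := fun θ =>
    ((hasDerivAt_cos θ).smul_const p.1).add ((hasDerivAt_sin θ).smul_const p.2)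
  have orbit_smooth : ContDiff ℝ 1 fun θ => (ContinuousLinearMap.rotation θ p).1 := by
    simp only [ContinuousLinearMap.rotation_apply]
    fun_prop
  obtain ⟨K, hK⟩ := orbit_smooth.contDiffOn.exists_lipschitzOnWith one_ne_zero
    (convex_uIcc 0 (π / 2)) isCompact_uIcc
  have ftc := (hf.comp_lipschitzOnWith hK).absolutelyContinuousOnInterval.integral_deriv_eq_sub
  simp only [Function.comp_apply, ContinuousLinearMap.rotation_apply, cos_pi_div_two, zero_smul,
    sin_pi_div_two, one_smul, zero_add, cos_zero, sin_zero, add_zero] at ftc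
  rw [← ftc]
  refine intervalIntegral.integral_congr_ae ?_
  filter_upwards [hp] with θ hθ _
  exact (hθ.hasFDerivAt.comp_hasDerivAt θ (orbit θ)).deriv.symm

lemma integrable_mul_orbitDeriv (hf : LipschitzWith C f) {ν : Measure ℝ} [IsFiniteMeasure ν] :
    Integrable (fun q : ℝ × E × E => f q.2.1 * orbitDeriv f q.1 q.2)
      (ν.prod ((stdGaussian E).prod (stdGaussian E))) := by
  have hid := IsGaussian.memLp_id (stdGaussian E) 2 ENNReal.ofNat_ne_top
  have hbound : Integrable (fun p : E × E => f p.1 * (C * (‖p.1‖ + ‖p.2‖)))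
      ((stdGaussian E).prod (stdGaussian E)) :=
    ((memLp_stdGaussian_of_lipschitz hf).comp_fst (stdGaussian E)).integrable_mul
      (((hid.comp_fst (stdGaussian E)).norm.add (hid.comp_snd (stdGaussian E)).norm).const_mul C)
  refine (hbound.comp_snd ν).mono
    ((hf.continuous.measurable.comp (by fun_prop)).mul measurable_orbitDeriv).aestronglyMeasurable
    (.of_forall fun q => ?_)
  rw [norm_mul, norm_mul]
  gcongr
  exact (abs_orbitDeriv_le hf _ _).trans (le_abs_self _)

lemma variance_stdGaussian_eq (hf : LipschitzWith C f) :
    Var[f; stdGaussian E] = -∫ θ in (0 : ℝ)..π / 2, ∫ p, f p.1 * orbitDeriv f θ p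
      ∂((stdGaussian E).prod (stdGaussian E)) := by
  have hL2 := memLp_stdGaussian_of_lipschitz hf
  have hL1 := hL2.integrable one_le_two
  calc Var[f; stdGaussian E]
      = ∫ x, f x ^ 2 ∂(stdGaussian E) - (∫ x, f x ∂(stdGaussian E)) ^ 2 := variance_eq_sub hL2
    _ = -∫ p, (f p.1 * f p.2 - f p.1 ^ 2) ∂((stdGaussian E).prod (stdGaussian E)) := by
        rw [integral_sub (hL1.mul_prod hL1) (hL2.integrable_sq.comp_fst _), integral_prod_mul,
          integral_fun_fst (fun x => f x ^ 2)]
        simp [sq]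
    _ = _ := by
        rw [intervalIntegral_integral_swap (integrable_mul_orbitDeriv hf), neg_inj]
        refine integral_congr_ae ?_
        filter_upwards [ae_integral_orbitDeriv hf] with p hp
        rw [intervalIntegral.integral_const_mul, hp]
        ring

omit [MeasurableSpace E] [BorelSpace E] in
lemma norm_gradient_le_of_lipschitz (hf : LipschitzWith C f) (x : E) : ‖gradient f x‖ ≤ C := by
  rw [gradient, LinearIsometryEquiv.norm_map]
  exact norm_fderiv_le_of_lipschitz ℝ hf

lemma measurable_gradient : Measurable (gradient f) :=
  (InnerProductSpace.toDual ℝ E).symm.continuous.measurable.comp (measurable_fderiv ℝ f)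

lemma integrable_norm_gradient_sq (hf : LipschitzWith C f) :
    Integrable (fun x => ‖gradient f x‖ ^ 2) (stdGaussian E) :=
  .of_bound (measurable_gradient.norm.pow_const 2).aestronglyMeasurable (C ^ 2)
    (.of_forall fun x => by
      rw [norm_pow, norm_norm]
      exact pow_le_pow_left₀ (norm_nonneg _) (norm_gradient_le_of_lipschitz hf x) 2)

lemma integrable_inner_gradient_rotation (hf : LipschitzWith C f) (θ : ℝ) :
    Integrable (fun p : E × E =>
        inner ℝ (gradient f (ContinuousLinearMap.rotation θ p).1) (gradient f p.1))
      ((stdGaussian E).prod (stdGaussian E)) :=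
  .of_bound ((measurable_gradient.comp (by fun_prop)).inner
      (measurable_gradient.comp (by fun_prop))).aestronglyMeasurable (C * C)
    (.of_forall fun p => (norm_inner_le_norm _ _).trans <| mul_le_mul
      (norm_gradient_le_of_lipschitz hf _) (norm_gradient_le_of_lipschitz hf _)
      (norm_nonneg _) C.2)

lemma integral_inner_gradient_rotation_le (hf : LipschitzWith C f) (θ : ℝ) :
    ∫ p, inner ℝ (gradient f (ContinuousLinearMap.rotation θ p).1) (gradient f p.1)
      ∂((stdGaussian E).prod (stdGaussian E)) ≤ ∫ x, ‖gradient f x‖ ^ 2 ∂(stdGaussian E) := by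
  have hrot := measurePreserving_fst.comp (measurePreserving_rotation_stdGaussian E θ)
  have hsq := integrable_norm_gradient_sq hf
  have hsq_rot : Integrable (fun p : E × E =>
      ‖gradient f (ContinuousLinearMap.rotation θ p).1‖ ^ 2)
      ((stdGaussian E).prod (stdGaussian E)) := hrot.integrable_comp_of_integrable hsq
  have integral_rot : ∫ p, ‖gradient f (ContinuousLinearMap.rotation θ p).1‖ ^ 2
      ∂((stdGaussian E).prod (stdGaussian E)) = ∫ x, ‖gradient f x‖ ^ 2 ∂(stdGaussian E) := by
    conv_rhs => rw [← hrot.map_eq]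
    exact (integral_map hrot.measurable.aemeasurable
      (measurable_gradient.norm.pow_const 2).aestronglyMeasurable).symm
  calc _ ≤ ∫ p : E × E, (‖gradient f (ContinuousLinearMap.rotation θ p).1‖ ^ 2
        + ‖gradient f p.1‖ ^ 2) / 2 ∂((stdGaussian E).prod (stdGaussian E)) := by
        refine integral_mono (integrable_inner_gradient_rotation hf θ)
          ((hsq_rot.add (hsq.comp_fst _)).div_const 2) fun p => ?_
        linarith [real_inner_le_norm (gradient f (ContinuousLinearMap.rotation θ p).1)
          (gradient f p.1), two_mul_le_add_sq ‖gradient f (ContinuousLinearMap.rotation θ p).1‖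
          ‖gradient f p.1‖]
    _ = ∫ x, ‖gradient f x‖ ^ 2 ∂(stdGaussian E) := by
        rw [integral_div, integral_add hsq_rot (hsq.comp_fst _), integral_rot,
          integral_fun_fst (fun x => ‖gradient f x‖ ^ 2)]
        simp

omit [MeasurableSpace E] [BorelSpace E] in
lemma lineDeriv_rotation {θ : ℝ} {x y : E}
    (h : DifferentiableAt ℝ f (ContinuousLinearMap.rotation θ (x, y)).1) (a : E) :
    lineDeriv ℝ (fun y => f (ContinuousLinearMap.rotation θ (x, y)).1) y a
      = sin θ * inner ℝ (gradient f (ContinuousLinearMap.rotation θ (x, y)).1) a := by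
  have line : HasDerivAt (fun t : ℝ => (ContinuousLinearMap.rotation θ (x, y + t • a)).1)
      (sin θ • a) 0 := by
    simpa [ContinuousLinearMap.rotation_apply] using
      ((((hasDerivAt_id (0 : ℝ)).smul_const a).const_add y).const_smul (sin θ)).const_add
        (cos θ • x)
  have h0 : DifferentiableAt ℝ f (ContinuousLinearMap.rotation θ (x, y + (0 : ℝ) • a)).1 := by
    simpa using h
  refine (h0.hasFDerivAt.comp_hasDerivAt 0 line).deriv.trans ?_
  simp [gradient]

lemma integral_mul_inner_gradient_rotation (hf : LipschitzWith C f) (θ : ℝ) (x : E) :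
    ∫ y, f (ContinuousLinearMap.rotation θ (x, y)).1 * inner ℝ y (gradient f x) ∂(stdGaussian E)
      = ∫ y, lineDeriv ℝ (fun y => f (ContinuousLinearMap.rotation θ (x, y)).1) y
        (gradient f x) ∂(stdGaussian E) := by
  have hlip : LipschitzWith (C * ‖sin θ‖₊)
      fun y => f (ContinuousLinearMap.rotation θ (x, y)).1 :=
    hf.comp (.of_dist_le_mul fun y z => by
      simp [ContinuousLinearMap.rotation_apply, dist_smul₀])
  rw [← integral_inner_mul_stdGaussian hlip]
  simp only [mul_comm]

lemma integrable_mul_orbitDeriv_right (hf : LipschitzWith C f) (θ : ℝ) :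
    Integrable (fun p : E × E => f p.1 * orbitDeriv f θ p)
      ((stdGaussian E).prod (stdGaussian E)) := by
  have := integrable_mul_orbitDeriv hf (ν := Measure.dirac θ)
  rw [Measure.dirac_prod] at this
  exact this.comp_measurable (by fun_prop)

omit [MeasurableSpace E] [BorelSpace E] in
lemma orbitDeriv_rotation_neg (f : E → ℝ) (θ : ℝ) (x y : E) :
    orbitDeriv f θ (ContinuousLinearMap.rotation (-θ) (x, y)) = inner ℝ y (gradient f x) := by
  have hrot :
      ContinuousLinearMap.rotation θ (ContinuousLinearMap.rotation (-θ) (x, y)) = (x, y) := by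
    simp only [ContinuousLinearMap.rotation_apply, cos_neg, sin_neg]
    ext1 <;> dsimp only <;> match_scalars <;> nlinarith [sin_sq_add_cos_sq θ]
  rw [orbitDeriv, hrot, real_inner_comm, gradient, InnerProductSpace.toDual_symm_apply]

/-- The point `(x, y)` and its rotate by `θ` have the same law, so that the derivative along the
orbit may be integrated by parts in the second variable of the rotate. -/
lemma integral_mul_orbitDeriv (hf : LipschitzWith C f) (θ : ℝ) :
    ∫ p, f p.1 * orbitDeriv f θ p ∂((stdGaussian E).prod (stdGaussian E))
      = -(sin θ * ∫ p, inner ℝ (gradient f (ContinuousLinearMap.rotation (-θ) p).1)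
        (gradient f p.1) ∂((stdGaussian E).prod (stdGaussian E))) := by
  have hrot := measurePreserving_rotation_stdGaussian E (-θ)
  have hint := integrable_mul_orbitDeriv_right hf θ
  calc _ = ∫ p, f (ContinuousLinearMap.rotation (-θ) p).1
        * orbitDeriv f θ (ContinuousLinearMap.rotation (-θ) p)
        ∂((stdGaussian E).prod (stdGaussian E)) := by
        conv_lhs => rw [← hrot.map_eq]
        exact integral_map hrot.measurable.aemeasurable (by rw [hrot.map_eq]; exact hint.1)
    _ = ∫ x, (∫ y, lineDeriv ℝ (fun y => f (ContinuousLinearMap.rotation (-θ) (x, y)).1) y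
        (gradient f x) ∂(stdGaussian E)) ∂(stdGaussian E) := by
        refine (integral_prod _ (hrot.integrable_comp_of_integrable hint)).trans ?_
        simp only [Function.comp_apply, orbitDeriv_rotation_neg,
          integral_mul_inner_gradient_rotation hf]
    _ = ∫ x, (∫ y, -sin θ * inner ℝ (gradient f (ContinuousLinearMap.rotation (-θ) (x, y)).1)
        (gradient f x) ∂(stdGaussian E)) ∂(stdGaussian E) := by
        refine integral_congr_ae ?_
        filter_upwards [Measure.ae_ae_of_ae_prod (ae_differentiableAt_rotation_fst hf (-θ))]
          with x hx
        refine integral_congr_ae ?_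
        filter_upwards [hx] with y hy
        rw [lineDeriv_rotation hy, sin_neg]
    _ = _ := by
        rw [← integral_prod _ ((integrable_inner_gradient_rotation hf (-θ)).const_mul _),
          integral_const_mul, neg_mul]

lemma variance_stdGaussian_le (hf : LipschitzWith C f) :
    Var[f; stdGaussian E] ≤ ∫ x, ‖gradient f x‖ ^ 2 ∂(stdGaussian E) := by
  rw [variance_stdGaussian_eq hf, ← intervalIntegral.integral_neg]
  calc _ ≤ ∫ θ in (0 : ℝ)..π / 2, sin θ * ∫ x, ‖gradient f x‖ ^ 2 ∂(stdGaussian E) := by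
        refine intervalIntegral.integral_mono_on pi_div_two_pos.le
          (intervalIntegrable_iff.2 (integrable_mul_orbitDeriv hf).integral_prod_left.neg)
          (Continuous.intervalIntegrable (by fun_prop) _ _) fun θ hθ => ?_
        rw [integral_mul_orbitDeriv hf, neg_neg]
        exact mul_le_mul_of_nonneg_left (integral_inner_gradient_rotation_le hf _)
          (sin_nonneg_of_nonneg_of_le_pi hθ.1 (by linarith [hθ.2, pi_pos]))
    _ = _ := by simp [intervalIntegral.integral_mul_const]

end GaussianPoincare

/-! ### The Poincaré inequality on the sphere -/

section SpherePoincare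

open ProbabilityTheory Module
open scoped NNReal

variable {E : Type*} [NormedAddCommGroup E] [InnerProductSpace ℝ E] {g : E → ℝ} {C : ℝ≥0}

lemma hasFDerivAt_norm {x : E} (hx : x ≠ 0) :
    HasFDerivAt (fun y : E => ‖y‖) (‖x‖⁻¹ • innerSL ℝ x) x := by
  have h := (hasStrictFDerivAt_norm_sq x).hasFDerivAt.sqrt (pow_ne_zero 2 (norm_ne_zero_iff.2 hx))
  simp only [sqrt_sq (norm_nonneg _)] at h
  convert! h using 1
  module

lemma hasFDerivAt_norm_inv {x : E} (hx : x ≠ 0) :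
    HasFDerivAt (fun y : E => ‖y‖⁻¹) (-(‖x‖ ^ 3)⁻¹ • innerSL ℝ x) x := by
  convert! (hasDerivAt_inv (norm_ne_zero_iff.2 hx)).comp_hasFDerivAt x (hasFDerivAt_norm hx) using 1
  rw [smul_smul]
  congr 1
  ring

lemma hasFDerivAt_normalize_of_norm_eq_one {x : E} (hx : ‖x‖ = 1) :
    HasFDerivAt (fun y : E => ‖y‖⁻¹ • y)
      (ContinuousLinearMap.id ℝ E - (innerSL ℝ x).smulRight x) x := by
  have hx0 : x ≠ 0 := norm_ne_zero_iff.1 (by rw [hx]; exact one_ne_zero)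
  convert! (hasFDerivAt_norm_inv hx0).smul (hasFDerivAt_id x) using 1
  ext v
  simp [hx, sub_eq_add_neg]

lemma norm_smul_normalize_sub_normalize_le {x y : E} (hx : x ≠ 0) (hy : y ≠ 0) :
    ‖y‖ * ‖‖x‖⁻¹ • x - ‖y‖⁻¹ • y‖ ≤ 2 * ‖x - y‖ := by
  have hx' := norm_ne_zero_iff.2 hx
  have hy' := norm_ne_zero_iff.2 hy
  calc ‖y‖ * ‖‖x‖⁻¹ • x - ‖y‖⁻¹ • y‖ = ‖‖y‖ • (‖x‖⁻¹ • x - ‖y‖⁻¹ • y)‖ := by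
        rw [norm_smul, norm_norm]
    _ = ‖(x - y) + (‖y‖ - ‖x‖) • ‖x‖⁻¹ • x‖ := by
        congr 1
        match_scalars <;> field
    _ ≤ ‖x - y‖ + ‖y - x‖ := by
        refine (norm_add_le _ _).trans (add_le_add_right ?_ _)
        rw [norm_smul, norm_smul, norm_inv, norm_norm, inv_mul_cancel₀ hx', mul_one]
        exact abs_norm_sub_norm_le y x
    _ = 2 * ‖x - y‖ := by rw [norm_sub_rev y x, two_mul]

/-- The positively `1`-homogeneous extension of the restriction of `g` to the unit sphere. -/
def homogeneousExtension (g : E → ℝ) (x : E) : ℝ := ‖x‖ * g (‖x‖⁻¹ • x)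

lemma homogeneousExtension_of_norm_eq_one {x : E} (hx : ‖x‖ = 1) :
    homogeneousExtension g x = g x := by
  simp [homogeneousExtension, hx]

lemma homogeneousExtension_smul (g : E → ℝ) {r : ℝ} (hr : 0 < r) (x : E) :
    homogeneousExtension g (r • x) = r * homogeneousExtension g x := by
  rw [homogeneousExtension, homogeneousExtension, norm_smul, norm_of_nonneg hr.le, mul_inv_rev,
    smul_smul, mul_assoc, mul_assoc, inv_mul_cancel₀ hr.ne', mul_one]

/-- The component of `∇g` orthogonal to the position vector, for points of the unit sphere. -/
def tangentialGradient [CompleteSpace E] (g : E → ℝ) (x : E) : E :=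
  gradient g x - inner ℝ (gradient g x) x • x

lemma norm_tangentialGradient_le [CompleteSpace E] {x : E} (hx : ‖x‖ = 1) :
    ‖tangentialGradient g x‖ ≤ ‖gradient g x‖ := by
  have h : ‖tangentialGradient g x‖ ^ 2 = ‖gradient g x‖ ^ 2 - inner ℝ (gradient g x) x ^ 2 := by
    rw [tangentialGradient, norm_sub_sq_real, real_inner_smul_right, norm_smul, hx, norm_eq_abs,
      mul_one, sq_abs]
    ring
  exact (pow_le_pow_iff_left₀ (norm_nonneg _) (norm_nonneg _) two_ne_zero).1
    (h.trans_le (sub_le_self _ (sq_nonneg _)))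

lemma gradient_comp_smul [CompleteSpace E] (g : E → ℝ) (r : ℝ) (x : E) :
    gradient (fun y => g (r • y)) x = r • gradient g (r • x) := by
  rw [gradient, fderiv_comp_smul, map_smul, gradient]

lemma gradient_homogeneousExtension [CompleteSpace E] {x : E} (hx : ‖x‖ = 1)
    (hg : DifferentiableAt ℝ g x) :
    gradient (homogeneousExtension g) x = g x • x + tangentialGradient g x := by
  have hx0 : x ≠ 0 := norm_ne_zero_iff.1 (by rw [hx]; exact one_ne_zero)
  have hg' : HasFDerivAt g (fderiv ℝ g x) (‖x‖⁻¹ • x) := by simpa [hx] using hg.hasFDerivAt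
  have h := (hasFDerivAt_norm hx0).mul
    (HasFDerivAt.comp (f := fun y : E => ‖y‖⁻¹ • y) x hg'
      (hasFDerivAt_normalize_of_norm_eq_one hx))
  refine ext_inner_right ℝ fun v => ?_
  rw [gradient, InnerProductSpace.toDual_symm_apply]
  refine (DFunLike.congr_fun h.fderiv v).trans ?_
  simp only [Function.comp_apply, add_apply, smul_apply,
    ContinuousLinearMap.comp_apply, sub_apply, ContinuousLinearMap.id_apply,
    ContinuousLinearMap.smulRight_apply, innerSL_apply_apply, hx, inv_one, one_smul, smul_eq_mul,
    map_sub, map_smul, tangentialGradient, gradient, inner_add_left, inner_sub_left,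
    real_inner_smul_left, InnerProductSpace.toDual_symm_apply]
  ring

lemma inv_norm_smul_mem_sphere {x : E} (hx : x ≠ 0) : ‖x‖⁻¹ • x ∈ sphere (0 : E) 1 := by
  simp [norm_smul, norm_ne_zero_iff.2 hx]

lemma abs_homogeneousExtension_le {M : ℝ} (hM : ∀ x ∈ sphere (0 : E) 1, |g x| ≤ M) (x : E) :
    |homogeneousExtension g x| ≤ M * ‖x‖ := by
  rcases eq_or_ne x 0 with rfl | hx
  · simp [homogeneousExtension]
  rw [homogeneousExtension, abs_mul, abs_norm, mul_comm]
  gcongr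
  exact hM _ (inv_norm_smul_mem_sphere hx)

lemma abs_homogeneousExtension_sub_le {M K : ℝ≥0} (hM : ∀ x ∈ sphere (0 : E) 1, |g x| ≤ M)
    (hK : LipschitzOnWith K g (sphere 0 1)) {x y : E} (hx : x ≠ 0) (hy : y ≠ 0) :
    |homogeneousExtension g x - homogeneousExtension g y| ≤ (M + K * 2) * ‖x - y‖ := by
  have hsplit : homogeneousExtension g x - homogeneousExtension g y =
      (‖x‖ - ‖y‖) * g (‖x‖⁻¹ • x) + ‖y‖ * (g (‖x‖⁻¹ • x) - g (‖y‖⁻¹ • y)) := by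
    simp only [homogeneousExtension]
    ring
  calc |homogeneousExtension g x - homogeneousExtension g y|
      ≤ |‖x‖ - ‖y‖| * |g (‖x‖⁻¹ • x)| + ‖y‖ * |g (‖x‖⁻¹ • x) - g (‖y‖⁻¹ • y)| := by
        rw [hsplit, ← abs_mul, ← abs_norm y, ← abs_mul, abs_norm]
        exact abs_add_le _ _
    _ ≤ ‖x - y‖ * M + ‖y‖ * (K * ‖‖x‖⁻¹ • x - ‖y‖⁻¹ • y‖) := by
        gcongr
        · exact abs_norm_sub_norm_le x y
        · exact hM _ (inv_norm_smul_mem_sphere hx)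
        · rw [← dist_eq, ← dist_eq_norm]
          exact hK.dist_le_mul _ (inv_norm_smul_mem_sphere hx) _ (inv_norm_smul_mem_sphere hy)
    _ = M * ‖x - y‖ + K * (‖y‖ * ‖‖x‖⁻¹ • x - ‖y‖⁻¹ • y‖) := by ring
    _ ≤ M * ‖x - y‖ + K * (2 * ‖x - y‖) := by
        gcongr _ + _ * ?_
        exact norm_smul_normalize_sub_normalize_le hx hy
    _ = (M + K * 2) * ‖x - y‖ := by ring

lemma exists_lipschitzWith_homogeneousExtension [FiniteDimensional ℝ E]
    (hg : ∀ x ∈ sphere (0 : E) 1, ContDiffAt ℝ 1 g x) :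
    ∃ C, LipschitzWith C (homogeneousExtension g) := by
  obtain ⟨K, hK⟩ := LocallyLipschitzOn.exists_lipschitzOnWith_of_compact
    (isCompact_sphere (0 : E) 1) fun x hx =>
      let ⟨K, t, ht, h⟩ := (hg x hx).exists_lipschitzOnWith
      ⟨K, t, mem_nhdsWithin_of_mem_nhds ht, h⟩
  obtain ⟨M, hM⟩ := (isCompact_sphere (0 : E) 1).exists_bound_of_continuousOn
    fun x hx => (hg x hx).continuousAt.continuousWithinAt
  have hM' : ∀ x ∈ sphere (0 : E) 1, |g x| ≤ M.toNNReal :=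
    fun x hx => (hM x hx).trans (le_coe_toNNReal M)
  have hbound : ∀ x, |homogeneousExtension g x| ≤ (M.toNNReal + K * 2) * ‖x‖ := fun x =>
    (abs_homogeneousExtension_le hM' x).trans
      (by gcongr; exact le_add_of_nonneg_right (by positivity))
  have hzero : homogeneousExtension g 0 = 0 := by simp [homogeneousExtension]
  refine ⟨M.toNNReal + K * 2, LipschitzWith.of_dist_le_mul fun x y => ?_⟩
  rw [dist_eq, dist_eq_norm, NNReal.coe_add, NNReal.coe_mul, NNReal.coe_ofNat]
  rcases eq_or_ne x 0 with rfl | hx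
  · simpa only [hzero, zero_sub, abs_neg, norm_neg] using hbound y
  rcases eq_or_ne y 0 with rfl | hy
  · simpa only [hzero, sub_zero] using hbound x
  exact abs_homogeneousExtension_sub_le hM' hK hx hy

lemma gradient_homogeneousExtension_smul [CompleteSpace E] (g : E → ℝ) {r : ℝ} (hr : 0 < r)
    (x : E) :
    gradient (homogeneousExtension g) (r • x) = gradient (homogeneousExtension g) x := by
  have hscale : (fun y => homogeneousExtension g (r • y)) = r • homogeneousExtension g :=
    funext (homogeneousExtension_smul g hr)
  have h := fderiv_comp_smul (𝕜 := ℝ) (f := homogeneousExtension g) (c := r) (x := x)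
  rw [hscale, fderiv_const_smul_field] at h
  rw [gradient, gradient, smul_right_injective _ hr.ne' h]

lemma norm_gradient_homogeneousExtension_sq [CompleteSpace E] {x : E} (hx : ‖x‖ = 1)
    (hg : DifferentiableAt ℝ g x) :
    ‖gradient (homogeneousExtension g) x‖ ^ 2 = g x ^ 2 + ‖tangentialGradient g x‖ ^ 2 := by
  have horth : inner ℝ (g x • x) (tangentialGradient g x) = 0 := by
    rw [tangentialGradient, inner_sub_right, real_inner_smul_left, real_inner_smul_left,
      real_inner_smul_right, real_inner_self_eq_norm_sq, hx, real_inner_comm]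
    ring
  rw [gradient_homogeneousExtension hx hg, sq, norm_add_sq_eq_norm_sq_add_norm_sq_real horth,
    norm_smul, hx, mul_one, norm_eq_abs, abs_mul_abs_self, ← sq, ← sq]

variable [FiniteDimensional ℝ E] [MeasurableSpace E] [BorelSpace E]

lemma integral_inner_sq_stdGaussian (a : E) :
    ∫ x, inner ℝ a x ^ 2 ∂(stdGaussian E) = ‖a‖ ^ 2 := by
  have h := variance_dual_stdGaussian (innerSL ℝ a)
  rwa [variance_of_integral_eq_zero (innerSL ℝ a).continuous.aemeasurable
    (integral_strongDual_stdGaussian _), innerSL_apply_norm] at h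

lemma integral_norm_sq_stdGaussian : ∫ x : E, ‖x‖ ^ 2 ∂(stdGaussian E) = finrank ℝ E := by
  let b := stdOrthonormalBasis ℝ E
  simp_rw [← b.sum_sq_inner_right]
  rw [integral_finsetSum]
  · simp [integral_inner_sq_stdGaussian, b.norm_eq_one]
  · exact fun i _ => (IsGaussian.memLp_dual (stdGaussian E) (innerSL ℝ (b i)) 2
      (by simp)).integrable_sq

variable [Nontrivial E]

lemma finrank_mul_average_inner_sq (a : E) :
    finrank ℝ E * ⨍ ω : sphere (0 : E) 1, inner ℝ a ω ^ 2 ∂volume.toSphere = ‖a‖ ^ 2 := by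
  rw [← integral_inner_sq_stdGaussian, ← integral_norm_sq_stdGaussian,
    ← integral_stdGaussian_of_homogeneous (f := fun x => inner ℝ a x ^ 2)]
  intro r x _
  rw [real_inner_smul_right, mul_pow]

lemma variance_homogeneousExtension (hg : LipschitzWith C (homogeneousExtension g))
    (hmean : ∫ ω : sphere (0 : E) 1, g ω ∂volume.toSphere = 0) :
    Var[homogeneousExtension g; stdGaussian E] =
      finrank ℝ E * ⨍ ω : sphere (0 : E) 1, g ω ^ 2 ∂volume.toSphere := by
  have hmean' : ∫ x, homogeneousExtension g x ∂(stdGaussian E) = 0 := by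
    rw [integral_stdGaussian_of_homogeneous (k := 1)
      (fun r x hr => by rw [homogeneousExtension_smul g hr, pow_one])]
    simp only [homogeneousExtension_of_norm_eq_one (norm_eq_of_mem_sphere (E := E) _),
      average_eq, hmean, smul_zero, mul_zero]
  rw [variance_of_integral_eq_zero hg.continuous.aemeasurable hmean',
    integral_stdGaussian_of_homogeneous (k := 2)
      (fun r x hr => by rw [homogeneousExtension_smul g hr, mul_pow]),
    integral_norm_sq_stdGaussian]
  simp only [homogeneousExtension_of_norm_eq_one (norm_eq_of_mem_sphere (E := E) _)]

lemma integral_norm_gradient_homogeneousExtension_sq :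
    ∫ x, ‖gradient (homogeneousExtension g) x‖ ^ 2 ∂(stdGaussian E) =
      ⨍ ω : sphere (0 : E) 1, ‖gradient (homogeneousExtension g) ω‖ ^ 2 ∂volume.toSphere := by
  rw [integral_stdGaussian_of_homogeneous (k := 0)
    (fun r x hr => by rw [gradient_homogeneousExtension_smul g hr, pow_zero, one_mul])]
  simp

theorem integral_sq_le_integral_tangentialGradient_sq
    (hg : ∀ x ∈ sphere (0 : E) 1, ContDiffAt ℝ 1 g x)
    (hmean : ∫ ω : sphere (0 : E) 1, g ω ∂volume.toSphere = 0) :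
    (finrank ℝ E - 1) * ∫ ω : sphere (0 : E) 1, g ω ^ 2 ∂volume.toSphere ≤
      ∫ ω : sphere (0 : E) 1, ‖tangentialGradient g ω‖ ^ 2 ∂volume.toSphere := by
  obtain ⟨C, hC⟩ := exists_lipschitzWith_homogeneousExtension hg
  have hsq : Integrable (fun ω : sphere (0 : E) 1 => g ω ^ 2) volume.toSphere :=
    ((continuous_iff_continuousAt.2 fun ω : sphere (0 : E) 1 =>
      ((hg ω ω.2).continuousAt.comp continuousAt_subtype_val :)).pow 2
        ).integrable_of_hasCompactSupport (HasCompactSupport.of_compactSpace _)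
  have hgrad : Integrable (fun ω : sphere (0 : E) 1 =>
      ‖gradient (homogeneousExtension g) ω‖ ^ 2) volume.toSphere :=
    Integrable.of_bound ((measurable_gradient.comp measurable_subtype_coe).norm.pow_const
      2).aestronglyMeasurable (C ^ 2) (.of_forall fun ω => by
        rw [norm_pow, norm_norm]
        gcongr
        exact norm_gradient_le_of_lipschitz hC _)
  have htangent : ∫ ω : sphere (0 : E) 1, ‖tangentialGradient g ω‖ ^ 2 ∂volume.toSphere =
      ∫ ω : sphere (0 : E) 1, ‖gradient (homogeneousExtension g) ω‖ ^ 2 ∂volume.toSphere -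
        ∫ ω : sphere (0 : E) 1, g ω ^ 2 ∂volume.toSphere := by
    rw [← integral_sub hgrad hsq]
    refine integral_congr_ae (.of_forall fun ω => ?_)
    simp only [norm_gradient_homogeneousExtension_sq (norm_eq_of_mem_sphere ω)
      ((hg ω ω.2).differentiableAt one_ne_zero), add_sub_cancel_left]
  have hpoincare := variance_stdGaussian_le hC
  rw [variance_homogeneousExtension hC hmean, integral_norm_gradient_homogeneousExtension_sq,
    average_eq, average_eq, smul_eq_mul, smul_eq_mul, mul_left_comm,
    mul_le_mul_iff_right₀ (inv_pos.2 measureReal_toSphere_univ_pos)] at hpoincare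
  linarith

end SpherePoincare

/-! ### Symbols with a singularity at the origin -/

section Symbol

open Asymptotics Module

variable {E F : Type*} [NormedAddCommGroup E] [NormedAddCommGroup F] {m n : ℤ}

/-- `f` is continuous off the origin and `‖f x‖ ≤ C ‖x‖ ^ n` there, for some constant `C`; the value
at the origin is irrelevant. -/
structure HasOrder (n : ℤ) (f : E → F) : Prop where
  continuousOn : ContinuousOn f {0}ᶜ
  isBigO : f =O[𝓟 {0}ᶜ] fun x => ‖x‖ ^ n

lemma norm_zpow_mul_norm_zpow_eventuallyEq (m n : ℤ) :
    (fun x : E => ‖x‖ ^ m * ‖x‖ ^ n) =ᶠ[𝓟 {0}ᶜ] fun x => ‖x‖ ^ (m + n) :=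
  eventually_principal.2 fun _ hx => (zpow_add₀ (norm_ne_zero_iff.2 hx) m n).symm

namespace HasOrder

lemma congr {f g : E → F} (hf : HasOrder n f) (h : Set.EqOn g f {0}ᶜ) : HasOrder n g :=
  ⟨hf.continuousOn.congr h, hf.isBigO.congr' (eventually_principal.2 fun _ hx => (h hx).symm) .rfl⟩

lemma add {f g : E → F} (hf : HasOrder n f) (hg : HasOrder n g) :
    HasOrder n fun x => f x + g x :=
  ⟨hf.continuousOn.add hg.continuousOn, hf.isBigO.add hg.isBigO⟩

lemma sub {f g : E → F} (hf : HasOrder n f) (hg : HasOrder n g) :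
    HasOrder n fun x => f x - g x :=
  ⟨hf.continuousOn.sub hg.continuousOn, hf.isBigO.sub hg.isBigO⟩

lemma sum {ι : Type*} {s : Finset ι} {f : ι → E → F} (hf : ∀ i ∈ s, HasOrder n (f i)) :
    HasOrder n fun x => ∑ i ∈ s, f i x :=
  ⟨continuousOn_finsetSum _ fun i hi => (hf i hi).continuousOn,
    IsBigO.fun_sum fun i hi => (hf i hi).isBigO⟩

lemma smul [NormedSpace ℝ F] {f : E → ℝ} {g : E → F} (hf : HasOrder m f) (hg : HasOrder n g) :
    HasOrder (m + n) fun x => f x • g x :=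
  ⟨hf.continuousOn.smul hg.continuousOn, (hf.isBigO.smul hg.isBigO).trans_eventuallyEq
    (norm_zpow_mul_norm_zpow_eventuallyEq m n)⟩

lemma mul {f g : E → ℝ} (hf : HasOrder m f) (hg : HasOrder n g) :
    HasOrder (m + n) fun x => f x * g x :=
  hf.smul hg

lemma const_mul {f : E → ℝ} (c : ℝ) (hf : HasOrder n f) : HasOrder n fun x => c * f x :=
  ⟨continuousOn_const.mul hf.continuousOn, hf.isBigO.const_mul_left c⟩

lemma of_continuous_hasCompactSupport {f : E → F} (hf : Continuous f) (hs : HasCompactSupport f) :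
    HasOrder 0 f := by
  obtain ⟨C, hC⟩ := hf.bounded_above_of_compact_support hs
  exact ⟨hf.continuousOn, isBigO_principal.2 ⟨C, fun x _ => by simpa using hC x⟩⟩

variable [NormedSpace ℝ E]

lemma clm_apply [NormedSpace ℝ F] {f : E → E →L[ℝ] F} (hf : HasOrder n f) (v : E) :
    HasOrder n fun x => f x v :=
  ⟨hf.continuousOn.clm_apply continuousOn_const,
    ((ContinuousLinearMap.apply ℝ F v).isBigO_comp f _).trans hf.isBigO⟩

variable [FiniteDimensional ℝ E]

lemma of_homogeneous [NormedSpace ℝ F] {f : E → F} (hf : ContinuousOn f {0}ᶜ)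
    (h : ∀ (r : ℝ) (x : E), 0 < r → f (r • x) = r ^ n • f x) : HasOrder n f := by
  obtain ⟨C, hC⟩ := (isCompact_sphere (0 : E) 1).exists_bound_of_continuousOn
    (hf.mono fun x hx => ne_of_mem_sphere hx one_ne_zero)
  refine ⟨hf, isBigO_principal.2 ⟨C, fun x hx => ?_⟩⟩
  have hpos : 0 < ‖x‖ := norm_pos_iff.2 hx
  have hunit : ‖x‖⁻¹ • x ∈ sphere (0 : E) 1 := by simp [norm_smul, hpos.ne']
  calc ‖f x‖ = ‖x‖ ^ n * ‖f (‖x‖⁻¹ • x)‖ := by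
        conv_lhs => rw [← smul_inv_smul₀ hpos.ne' x, h _ _ hpos]
        rw [norm_smul, norm_zpow, norm_norm]
    _ ≤ C * ‖‖x‖ ^ n‖ := by
        rw [mul_comm, norm_zpow, norm_norm]
        gcongr
        exact hC _ hunit

end HasOrder

variable [NormedSpace ℝ E] [FiniteDimensional ℝ E] [Nontrivial E] [MeasurableSpace E] [BorelSpace E]
  {μ : Measure E} [μ.IsAddHaarMeasure]

lemma integrable_indicator_Iic_norm_zpow (hn : -(finrank ℝ E : ℤ) < n) (R : ℝ) :
    Integrable (fun x : E => (Set.Iic R).indicator (fun r : ℝ => r ^ n) ‖x‖) μ := by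
  rw [integrable_fun_norm_addHaar μ]
  obtain ⟨k, hk⟩ := Int.eq_ofNat_of_zero_le (show 0 ≤ n + (finrank ℝ E - 1 : ℤ) by lia)
  have hd : 1 ≤ finrank ℝ E := finrank_pos
  have hcongr : Set.EqOn (fun y : ℝ => y ^ (finrank ℝ E - 1) •
      (Set.Iic R).indicator (fun r : ℝ => r ^ n) y)
      ((Set.Iic R).indicator fun y => y ^ k) (Set.Ioi 0) := fun y hy => by
    by_cases hyR : y ∈ Set.Iic R
    · simp only [Set.indicator_of_mem hyR, smul_eq_mul]
      rw [← zpow_natCast, ← zpow_natCast, ← zpow_add₀ (ne_of_gt hy)]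
      congr 1
      lia
    · simp only [Set.indicator_of_notMem hyR, smul_zero]
  rw [integrableOn_congr_fun hcongr measurableSet_Ioi, IntegrableOn,
    integrable_indicator_iff measurableSet_Iic, IntegrableOn,
    Measure.restrict_restrict measurableSet_Iic, Set.inter_comm, Set.Ioi_inter_Iic]
  exact ((continuous_pow k).integrableOn_Icc (a := 0) (b := R)).mono_set Set.Ioc_subset_Icc_self

lemma HasOrder.integrable {f : E → F} (hf : HasOrder n f) (hs : HasCompactSupport f)
    (hn : -(finrank ℝ E : ℤ) < n) : Integrable f μ := by
  obtain ⟨C, hC0, hC⟩ := hf.isBigO.exists_nonneg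
  obtain ⟨R, hR⟩ := hs.isCompact.isBounded.exists_norm_le
  have hmeas : AEStronglyMeasurable f μ := by
    rw [← restrict_compl_singleton (μ := μ) (0 : E)]
    exact hf.continuousOn.aestronglyMeasurable (measurableSet_singleton _).compl
  refine ((integrable_indicator_Iic_norm_zpow hn R).const_mul C).mono' hmeas ?_
  filter_upwards [Measure.ae_ne μ 0] with x hx
  by_cases hxs : x ∈ tsupport f
  · simpa [hR x hxs] using isBigOWith_principal.1 hC x hx
  · rw [image_eq_zero_of_notMem_tsupport hxs, norm_zero]
    exact mul_nonneg hC0 (Set.indicator_apply_nonneg fun _ => by positivity)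

end Symbol

section SymbolCalculus

open Asymptotics Module

variable {E : Type*} [NormedAddCommGroup E] [NormedSpace ℝ E] {m n : ℤ} {f g : E → ℝ}

/-- `f` is a `C¹` symbol of order `n`: it is `C¹` off the origin, of order `n`, and its derivative
is of order `n - 1`. -/
structure IsSymbol (n : ℤ) (f : E → ℝ) : Prop where
  contDiffOn : ContDiffOn ℝ 1 f {0}ᶜ
  hasOrder : HasOrder n f
  hasOrder_fderiv : HasOrder (n - 1) (fderiv ℝ f)

namespace IsSymbol

lemma differentiableAt (hf : IsSymbol n f) {x : E} (hx : x ≠ 0) : DifferentiableAt ℝ f x :=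
  (hf.contDiffOn.differentiableOn one_ne_zero).differentiableAt (isOpen_compl_singleton.mem_nhds hx)

lemma add (hf : IsSymbol n f) (hg : IsSymbol n g) : IsSymbol n fun x => f x + g x where
  contDiffOn := hf.contDiffOn.add hg.contDiffOn
  hasOrder := hf.hasOrder.add hg.hasOrder
  hasOrder_fderiv := (hf.hasOrder_fderiv.add hg.hasOrder_fderiv).congr fun _ hx =>
    fderiv_fun_add (hf.differentiableAt hx) (hg.differentiableAt hx)

lemma sub (hf : IsSymbol n f) (hg : IsSymbol n g) : IsSymbol n fun x => f x - g x where
  contDiffOn := hf.contDiffOn.sub hg.contDiffOn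
  hasOrder := hf.hasOrder.sub hg.hasOrder
  hasOrder_fderiv := (hf.hasOrder_fderiv.sub hg.hasOrder_fderiv).congr fun _ hx =>
    fderiv_fun_sub (hf.differentiableAt hx) (hg.differentiableAt hx)

lemma sum {ι : Type*} {s : Finset ι} {f : ι → E → ℝ} (hf : ∀ i ∈ s, IsSymbol n (f i)) :
    IsSymbol n fun x => ∑ i ∈ s, f i x where
  contDiffOn := ContDiffOn.sum fun i hi => (hf i hi).contDiffOn
  hasOrder := .sum fun i hi => (hf i hi).hasOrder
  hasOrder_fderiv := (HasOrder.sum fun i hi => (hf i hi).hasOrder_fderiv).congr fun _ hx =>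
    fderiv_fun_sum fun i hi => (hf i hi).differentiableAt hx

lemma mul (hf : IsSymbol m f) (hg : IsSymbol n g) : IsSymbol (m + n) fun x => f x * g x where
  contDiffOn := hf.contDiffOn.mul hg.contDiffOn
  hasOrder := hf.hasOrder.mul hg.hasOrder
  hasOrder_fderiv := by
    have h₁ := hf.hasOrder.smul hg.hasOrder_fderiv
    have h₂ := hg.hasOrder.smul hf.hasOrder_fderiv
    rw [add_sub, add_comm n m] at h₂
    rw [add_sub] at h₁
    exact (h₁.add h₂).congr fun _ hx =>
      fderiv_fun_mul (hf.differentiableAt hx) (hg.differentiableAt hx)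

lemma const_mul (c : ℝ) (hf : IsSymbol n f) : IsSymbol n fun x => c * f x where
  contDiffOn := contDiffOn_const.mul hf.contDiffOn
  hasOrder := hf.hasOrder.const_mul c
  hasOrder_fderiv := by
    have hfderiv : fderiv ℝ (fun x => c * f x) = c • fderiv ℝ f := fderiv_const_smul_field c
    refine ⟨?_, ?_⟩ <;> rw [hfderiv]
    · exact hf.hasOrder_fderiv.continuousOn.const_smul c
    · exact hf.hasOrder_fderiv.isBigO.const_smul_left c

lemma of_homogeneous [FiniteDimensional ℝ E] (hf : ContDiffOn ℝ 1 f {0}ᶜ)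
    (h : ∀ (r : ℝ) (x : E), 0 < r → f (r • x) = r ^ n * f x) : IsSymbol n f where
  contDiffOn := hf
  hasOrder := .of_homogeneous hf.continuousOn h
  hasOrder_fderiv := by
    refine .of_homogeneous (hf.continuousOn_fderiv_of_isOpen isOpen_compl_singleton le_rfl)
      fun r x hr => ?_
    have hscale : (fun y => f (r • y)) = r ^ n • f := funext fun y => h r y hr
    have hD := fderiv_comp_smul (𝕜 := ℝ) (f := f) (c := r) (x := x)
    rw [hscale, fderiv_const_smul_field] at hD
    rw [zpow_sub_one₀ hr.ne', mul_comm, mul_smul, eq_inv_smul_iff₀ hr.ne', ← hD, Pi.smul_apply]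

lemma of_contDiff_hasCompactSupport (hf : ContDiff ℝ 1 f) (hs : HasCompactSupport f) :
    IsSymbol 0 f where
  contDiffOn := hf.contDiffOn
  hasOrder := .of_continuous_hasCompactSupport hf.continuous hs
  hasOrder_fderiv := by
    have hcont := hf.continuous_fderiv one_ne_zero
    obtain ⟨C, hC⟩ := (continuous_norm.smul hcont).bounded_above_of_compact_support
      ((hs.fderiv ℝ).smul_left)
    refine ⟨hcont.continuousOn, isBigO_principal.2 ⟨C, fun x hx => ?_⟩⟩
    have h : ‖‖x‖ • fderiv ℝ f x‖ ≤ C := hC x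
    rw [norm_smul, norm_norm, mul_comm, ← le_div_iff₀ (norm_pos_iff.2 hx)] at h
    simpa [div_eq_mul_inv] using h

lemma of_lipschitzWith {C : NNReal} (hf : LipschitzWith C f) (h0 : f 0 = 0)
    (hd : ContDiffOn ℝ 1 f {0}ᶜ) : IsSymbol 1 f where
  contDiffOn := hd
  hasOrder := ⟨hd.continuousOn, isBigO_principal.2 ⟨C, fun x _ => by
    simpa [h0] using hf.norm_sub_le x 0⟩⟩
  hasOrder_fderiv := ⟨hd.continuousOn_fderiv_of_isOpen isOpen_compl_singleton le_rfl,
    isBigO_principal.2 ⟨C, fun x _ => by simpa using norm_fderiv_le_of_lipschitz ℝ hf⟩⟩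

variable [FiniteDimensional ℝ E] [MeasurableSpace E] [BorelSpace E]
  {μ : Measure E} [μ.IsAddHaarMeasure]

lemma integrable_fderiv_apply [Nontrivial E] (hf : IsSymbol n f) (hs : HasCompactSupport f)
    (hn : 1 - (finrank ℝ E : ℤ) < n) (v : E) : Integrable (fun x => fderiv ℝ f x v) μ :=
  (hf.hasOrder_fderiv.clm_apply v).integrable (hs.fderiv_apply ℝ v) (by lia)

lemma integral_fderiv_apply_eq_zero (hE : 1 < finrank ℝ E) (hf : IsSymbol n f)
    (hs : HasCompactSupport f) (hn : 1 - (finrank ℝ E : ℤ) < n) (v : E) :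
    ∫ x, fderiv ℝ f x v ∂μ = 0 :=
  have : Nontrivial E := nontrivial_of_finrank_pos (zero_lt_one.trans hE)
  _root_.integral_fderiv_apply_eq_zero hE hf.contDiffOn v
    (hf.hasOrder.integrable hs (by lia)) (hf.integrable_fderiv_apply hs hn v)

end IsSymbol

end SymbolCalculus

/-! ### Spherical means -/

section SphericalMean

variable {K : Type*} [TopologicalSpace K] [CompactSpace K] [MeasurableSpace K] [BorelSpace K]
  {ν : Measure K} [IsFiniteMeasure ν]

lemma integrable_of_continuous_of_compactSpace {f : K → ℝ} (hf : Continuous f) : Integrable f ν :=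
  hf.integrable_of_hasCompactSupport (.of_compactSpace f)

lemma hasDerivAt_integral_of_continuous_deriv {F F' : ℝ → K → ℝ} (hF : ∀ s, Continuous (F s))
    (hF' : Continuous (Function.uncurry F')) (h : ∀ s ω, HasDerivAt (F · ω) (F' s ω) s) (r : ℝ) :
    HasDerivAt (fun s => ∫ ω, F s ω ∂ν) (∫ ω, F' r ω ∂ν) r := by
  obtain ⟨C, hC⟩ := ((isCompact_closedBall r 1).prod (isCompact_univ (X := K))
    ).exists_bound_of_continuousOn hF'.continuousOn
  exact (hasDerivAt_integral_of_dominated_loc_of_deriv_le (bound := fun _ => C)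
    (closedBall_mem_nhds r one_pos)
    (.of_forall fun s => (integrable_of_continuous_of_compactSpace (hF s)).aestronglyMeasurable)
    (integrable_of_continuous_of_compactSpace (hF r))
    (integrable_of_continuous_of_compactSpace (by fun_prop)).aestronglyMeasurable
    (.of_forall fun ω s hs => hC (s, ω) ⟨hs, Set.mem_univ ω⟩) (integrable_const C)
    (.of_forall fun ω s _ => h s ω)).2

variable {E : Type*} [NormedAddCommGroup E] [InnerProductSpace ℝ E] [FiniteDimensional ℝ E]
  [MeasurableSpace E] [BorelSpace E] {f : E → ℝ}

/-- The mean of `f` over the sphere of radius `r` about the origin. -/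
def sphericalMean (f : E → ℝ) (r : ℝ) : ℝ := ⨍ ω : sphere (0 : E) 1, f (r • ω.1) ∂volume.toSphere

/-- The fluctuation of `f` around its spherical means. -/
def sphericalFluctuation (f : E → ℝ) (x : E) : ℝ := f x - sphericalMean f ‖x‖

lemma hasDerivAt_sphericalMean (hf : ContDiff ℝ 1 f) (r : ℝ) :
    HasDerivAt (sphericalMean f)
      (⨍ ω : sphere (0 : E) 1, fderiv ℝ f (r • ω.1) ω ∂volume.toSphere) r := by
  have hf' := hf.continuous_fderiv one_ne_zero
  refine hasDerivAt_integral_of_continuous_deriv (F := fun s (ω : sphere (0 : E) 1) => f (s • ω.1))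
    (F' := fun s ω => fderiv ℝ f (s • ω.1) ω) (fun s => hf.continuous.comp (by fun_prop))
    ((hf'.comp (by fun_prop)).clm_apply (by fun_prop)) (fun s ω => ?_) r
  have hline : HasDerivAt (fun s : ℝ => s • ω.1) ω.1 s := by
    simpa using (hasDerivAt_id s).smul_const ω.1
  exact (hf.differentiable one_ne_zero _).hasFDerivAt.comp_hasDerivAt s hline

lemma contDiff_sphericalMean (hf : ContDiff ℝ 1 f) : ContDiff ℝ 1 (sphericalMean f) := by
  refine contDiff_one_iff_deriv.2 ⟨fun r => (hasDerivAt_sphericalMean hf r).differentiableAt, ?_⟩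
  rw [funext fun r => (hasDerivAt_sphericalMean hf r).deriv]
  simp only [average]
  simp_rw [← setIntegral_univ (μ := (_ : ENNReal) • _)]
  have hf' := hf.continuous_fderiv one_ne_zero
  exact continuous_parametric_integral_of_continuous
    (f := fun r (ω : sphere (0 : E) 1) => fderiv ℝ f (r • ω.1) ω)
    ((hf'.comp (by fun_prop)).clm_apply (by fun_prop)) isCompact_univ

lemma hasCompactSupport_sphericalMean (hs : HasCompactSupport f) :
    HasCompactSupport (sphericalMean f) := by
  obtain ⟨R, hR⟩ := hs.isCompact.isBounded.exists_norm_le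
  refine HasCompactSupport.intro (isCompact_closedBall 0 R) fun r hr => ?_
  have hzero : ∀ ω : sphere (0 : E) 1, f (r • ω.1) = 0 := fun ω =>
    image_eq_zero_of_notMem_tsupport fun h => hr <| by
      simpa [norm_smul, norm_eq_of_mem_sphere ω] using hR _ h
  simp only [sphericalMean, hzero, average_zero]

lemma sphericalMean_zero [Nontrivial E] (f : E → ℝ) : sphericalMean f 0 = f 0 := by
  have : NeZero (volume : Measure E).toSphere := ⟨Measure.toSphere_ne_zero _⟩
  simp only [sphericalMean, zero_smul, average_const]

lemma hasCompactSupport_sphericalFluctuation (hs : HasCompactSupport f) :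
    HasCompactSupport (sphericalFluctuation f) := by
  obtain ⟨R, hR⟩ := (hasCompactSupport_sphericalMean hs).isCompact.isBounded.exists_norm_le
  refine hs.sub (HasCompactSupport.intro (isCompact_closedBall 0 R) fun x hx =>
    image_eq_zero_of_notMem_tsupport fun h => hx ?_)
  simpa using hR _ h

lemma hasFDerivAt_sphericalMean_norm (hf : ContDiff ℝ 1 f) {x : E} (hx : x ≠ 0) :
    HasFDerivAt (fun y => sphericalMean f ‖y‖)
      (deriv (sphericalMean f) ‖x‖ • ‖x‖⁻¹ • innerSL ℝ x) x :=
  ((hasDerivAt_sphericalMean hf _).differentiableAt.hasDerivAt).comp_hasFDerivAt x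
    (hasFDerivAt_norm hx)

lemma contDiffOn_sphericalFluctuation (hf : ContDiff ℝ 1 f) :
    ContDiffOn ℝ 1 (sphericalFluctuation f) {0}ᶜ := fun _ hx =>
  (hf.contDiffAt.sub ((contDiff_sphericalMean hf).contDiffAt.comp _
    (contDiffAt_norm ℝ hx))).contDiffWithinAt

lemma isSymbol_sphericalFluctuation [Nontrivial E] (hf : ContDiff ℝ 1 f)
    (hs : HasCompactSupport f) : IsSymbol 1 (sphericalFluctuation f) := by
  obtain ⟨C₁, hC₁⟩ := hf.lipschitzWith_of_hasCompactSupport hs one_ne_zero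
  obtain ⟨C₂, hC₂⟩ := (contDiff_sphericalMean hf).lipschitzWith_of_hasCompactSupport
    (hasCompactSupport_sphericalMean hs) one_ne_zero
  exact .of_lipschitzWith (hC₁.sub (hC₂.comp lipschitzWith_one_norm))
    (by rw [sphericalFluctuation, norm_zero, sphericalMean_zero, sub_self])
    (contDiffOn_sphericalFluctuation hf)

lemma integral_sphericalFluctuation {r : ℝ} (hr : 0 ≤ r) :
    ∫ ω : sphere (0 : E) 1, sphericalFluctuation f (r • ω.1) ∂volume.toSphere = 0 := by
  simp only [sphericalFluctuation, norm_smul, norm_eq_of_mem_sphere, mul_one, norm_of_nonneg hr]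
  exact integral_sub_average _ _

lemma fderiv_sphericalFluctuation (hf : ContDiff ℝ 1 f) {x : E} (hx : x ≠ 0) (v : E) :
    fderiv ℝ (sphericalFluctuation f) x v =
      fderiv ℝ f x v - deriv (sphericalMean f) ‖x‖ * (‖x‖⁻¹ * inner ℝ x v) :=
  DFunLike.congr_fun ((hf.differentiable one_ne_zero x).hasFDerivAt.sub
    (hasFDerivAt_sphericalMean_norm hf hx)).fderiv v

lemma integral_fderiv_sphericalFluctuation (hf : ContDiff ℝ 1 f) {r : ℝ} (hr : 0 < r) :
    ∫ ω : sphere (0 : E) 1, fderiv ℝ (sphericalFluctuation f) (r • ω.1) ω ∂volume.toSphere = 0 := by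
  rw [← integral_sub_average volume.toSphere
    fun ω : sphere (0 : E) 1 => fderiv ℝ f (r • ω.1) ω, ← (hasDerivAt_sphericalMean hf r).deriv]
  refine integral_congr_ae (.of_forall fun ω => ?_)
  have hω : r • ω.1 ≠ 0 := smul_ne_zero hr.ne' (ne_of_mem_sphere ω.2 one_ne_zero)
  simp only [fderiv_sphericalFluctuation hf hω, norm_smul, norm_eq_of_mem_sphere, mul_one,
    norm_of_nonneg hr.le, real_inner_smul_left, real_inner_self_eq_norm_sq, one_pow,
    inv_mul_cancel₀ hr.ne']

omit [FiniteDimensional ℝ E] [MeasurableSpace E] [BorelSpace E] in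
lemma continuous_comp_smul_sphere {F : Type*} [TopologicalSpace F] {f : E → F}
    (hf : ContinuousOn f {0}ᶜ) {r : ℝ} (hr : r ≠ 0) :
    Continuous fun ω : sphere (0 : E) 1 => f (r • ω.1) :=
  hf.comp_continuous (by fun_prop) fun ω => smul_ne_zero hr (ne_of_mem_sphere ω.2 one_ne_zero)

lemma integral_sphericalFluctuation_sq_le [Nontrivial E] (hf : ContDiff ℝ 1 f) {r : ℝ}
    (hr : 0 < r) :
    (Module.finrank ℝ E - 1) *
        ∫ ω : sphere (0 : E) 1, sphericalFluctuation f (r • ω.1) ^ 2 ∂volume.toSphere ≤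
      r ^ 2 * ∫ ω : sphere (0 : E) 1, ‖gradient (sphericalFluctuation f) (r • ω.1)‖ ^ 2
        ∂volume.toSphere := by
  have hsmooth : ∀ x ∈ sphere (0 : E) 1,
      ContDiffAt ℝ 1 (fun y => sphericalFluctuation f (r • y)) x := fun x hx =>
    ((contDiffOn_sphericalFluctuation hf).contDiffAt (isOpen_compl_singleton.mem_nhds
      (smul_ne_zero hr.ne' (ne_of_mem_sphere hx one_ne_zero)))).comp x (by fun_prop)
  have hcont : ContinuousOn (gradient (sphericalFluctuation f)) {0}ᶜ :=
    (InnerProductSpace.toDual ℝ E).symm.continuous.comp_continuousOn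
      ((contDiffOn_sphericalFluctuation hf).continuousOn_fderiv_of_isOpen
        isOpen_compl_singleton le_rfl)
  refine (integral_sq_le_integral_tangentialGradient_sq hsmooth
    (integral_sphericalFluctuation hr.le)).trans ?_
  rw [← integral_const_mul]
  refine integral_mono_of_nonneg (.of_forall fun ω => sq_nonneg _)
    (integrable_of_continuous_of_compactSpace
      (((continuous_comp_smul_sphere hcont hr.ne').norm.pow 2).const_mul _))
    (.of_forall fun ω => ?_)
  calc _ ≤ ‖gradient (fun y => sphericalFluctuation f (r • y)) ω‖ ^ 2 := by
        exact pow_le_pow_left₀ (norm_nonneg _)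
          (norm_tangentialGradient_le (norm_eq_of_mem_sphere ω)) 2
    _ = r ^ 2 * ‖gradient (sphericalFluctuation f) (r • ω.1)‖ ^ 2 := by
        rw [gradient_comp_smul, norm_smul, mul_pow, norm_eq_abs, sq_abs]

end SphericalMean

/-! ### Calculus on `ℝ³` -/

section PartialDerivatives

variable {f g : E3 → ℝ} {x : E3}

lemma pd_add (hf : DifferentiableAt ℝ f x) (hg : DifferentiableAt ℝ g x) (k : Fin 3) :
    pd k (fun y => f y + g y) x = pd k f x + pd k g x :=
  DFunLike.congr_fun (fderiv_fun_add hf hg) _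

lemma pd_sub (hf : DifferentiableAt ℝ f x) (hg : DifferentiableAt ℝ g x) (k : Fin 3) :
    pd k (fun y => f y - g y) x = pd k f x - pd k g x :=
  DFunLike.congr_fun (fderiv_fun_sub hf hg) _

lemma pd_sum {ι : Type*} {s : Finset ι} {f : ι → E3 → ℝ}
    (hf : ∀ i ∈ s, DifferentiableAt ℝ (f i) x) (k : Fin 3) :
    pd k (fun y => ∑ i ∈ s, f i y) x = ∑ i ∈ s, pd k (f i) x := by
  simp only [pd, fderiv_fun_sum hf, sum_apply]

lemma pd_const_mul (c : ℝ) (f : E3 → ℝ) (x : E3) (k : Fin 3) :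
    pd k (fun y => c * f y) x = c * pd k f x :=
  DFunLike.congr_fun (congr_fun (fderiv_const_smul_field (f := f) c) x) _

lemma pd_mul (hf : DifferentiableAt ℝ f x) (hg : DifferentiableAt ℝ g x) (k : Fin 3) :
    pd k (fun y => f y * g y) x = f x * pd k g x + g x * pd k f x :=
  DFunLike.congr_fun (fderiv_fun_mul hf hg) _

lemma fderiv_eq_sum_pd (f : E3 → ℝ) (x v : E3) : fderiv ℝ f x v = ∑ k, v k * pd k f x := by
  have hv : v = ∑ k, v k • EuclideanSpace.single k (1 : ℝ) := by
    simpa using ((EuclideanSpace.basisFun (Fin 3) ℝ).sum_repr v).symm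
  conv_lhs => rw [hv]
  simp only [map_sum, map_smul, smul_eq_mul, pd]

lemma norm_gradient_sq_eq_sum_pd_sq (f : E3 → ℝ) (x : E3) :
    ‖gradient f x‖ ^ 2 = ∑ k, pd k f x ^ 2 := by
  rw [← (EuclideanSpace.basisFun (Fin 3) ℝ).sum_sq_norm_inner_left]
  simp [pd, gradient]

/-- The unit vector `x / |x|` (zero at the origin). -/
def direction (x : E3) (i : Fin 3) : ℝ := ‖x‖⁻¹ * x i

lemma direction_smul {r : ℝ} (hr : 0 < r) (ω : sphere (0 : E3) 1) :
    direction (r • ω.1) = ω.1 := by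
  ext i
  simp [direction, norm_smul, abs_of_pos hr, hr.ne']

lemma direction_dotProduct_self (hx : x ≠ 0) : direction x ⬝ᵥ direction x = 1 := by
  have hx' : ‖x‖ ^ 2 ≠ 0 := pow_ne_zero 2 (norm_ne_zero_iff.2 hx)
  calc direction x ⬝ᵥ direction x = (‖x‖ ^ 2)⁻¹ * ∑ i, x i ^ 2 := by
        simp only [dotProduct, direction, Finset.mul_sum]
        exact Finset.sum_congr rfl fun i _ => by ring
    _ = 1 := by rw [← EuclideanSpace.real_norm_sq_eq, inv_mul_cancel₀ hx']

lemma pd_coord (i k : Fin 3) (x : E3) : pd k (fun y => y i) x = if i = k then 1 else 0 := by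
  have h : HasFDerivAt (fun y : E3 => y i) (EuclideanSpace.proj (𝕜 := ℝ) i : E3 →L[ℝ] ℝ) x :=
    (EuclideanSpace.proj (𝕜 := ℝ) i : E3 →L[ℝ] ℝ).hasFDerivAt
  simp [pd, h.fderiv]

lemma pd_norm_inv (hx : x ≠ 0) (k : Fin 3) :
    pd k (fun y => ‖y‖⁻¹) x = -(‖x‖⁻¹ ^ 2 * direction x k) := by
  simp only [pd, (hasFDerivAt_norm_inv hx).fderiv, direction, _root_.smul_apply,
    innerSL_apply_apply, EuclideanSpace.inner_single_right, conj_trivial, one_mul, smul_eq_mul]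
  ring

lemma pd_direction (hx : x ≠ 0) (i k : Fin 3) :
    pd k (direction · i) x =
      ‖x‖⁻¹ * ((if i = k then 1 else 0) - direction x i * direction x k) := by
  unfold direction
  rw [pd_mul (hasFDerivAt_norm_inv hx).differentiableAt (by fun_prop), pd_norm_inv hx, pd_coord]
  simp only [direction]
  ring

lemma isSymbol_norm_inv : IsSymbol (-1) fun x : E3 => ‖x‖⁻¹ :=
  .of_homogeneous ((contDiffOn_id.norm ℝ fun _ hx => hx).inv fun _ hx => norm_ne_zero_iff.2 hx)
    fun r x hr => by rw [norm_smul, norm_of_nonneg hr.le, mul_inv, zpow_neg_one]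

lemma isSymbol_direction (i : Fin 3) : IsSymbol 0 (direction · i) :=
  .of_homogeneous (isSymbol_norm_inv.contDiffOn.mul (by fun_prop)) fun r x hr => by
    simp only [direction, norm_smul, norm_of_nonneg hr.le, PiLp.smul_apply, smul_eq_mul]
    field_simp

end PartialDerivatives

/-! ### The energy density -/

section EnergyDensity

variable (α : ℝ) (u : E3 → Fin 3 → ℝ) {x : E3}

/-- The Jacobian of a vector field, with entries `∂ₖ uᵢ` in row `k` and column `i`. -/
def jacobian (u : E3 → Fin 3 → ℝ) (x : E3) : Matrix (Fin 3) (Fin 3) ℝ :=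
  .of fun k i => pd k (fun y => u y i) x

/-- The potential `Φ u`. -/
def potential (x : E3) (i : Fin 3) : ℝ := ∑ j, Phi α x i j * u x j

/-- The flux `∂ₖ uᵢ Wᵢ + α (div u) Wₖ`, where `W = Φ u`, produced by integrating `(Lu)·W` by
parts. -/
def flux (k : Fin 3) (x : E3) : ℝ :=
  ∑ i, pd k (fun y => u y i) x * potential α u x i + α * (divg u x * potential α u x k)

/-- The part of the energy density that is quadratic in the Jacobian `M`, in direction `ω`. -/
def energyForm (M : Matrix (Fin 3) (Fin 3) ℝ) (ω : Fin 3 → ℝ) : ℝ :=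
  ∑ k, ∑ i, M k i ^ 2 + α / (α + 2) * (M.mulVec ω ⬝ᵥ M.mulVec ω) + α * M.trace ^ 2 +
    α * (α / (α + 2)) * (M.trace * (ω ⬝ᵥ M.mulVec ω))

/-- The cross term coupling the field `a` to the tangential part of its Jacobian `M`. -/
def crossForm (a : Fin 3 → ℝ) (M : Matrix (Fin 3) (Fin 3) ℝ) (ω : Fin 3 → ℝ) : ℝ :=
  (a ⬝ᵥ ω) * M.trace - a ⬝ᵥ M.mulVec ω

/-- The cross term coupling the field `a` to its radial derivative, where `M` is its Jacobian. -/
def radialForm (a : Fin 3 → ℝ) (M : Matrix (Fin 3) (Fin 3) ℝ) (ω : Fin 3 → ℝ) : ℝ :=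
  ω ⬝ᵥ M.mulVec a + 3 * (α / (α + 2)) * ((a ⬝ᵥ ω) * (ω ⬝ᵥ M.mulVec ω))

lemma Phi_eq_direction (x : E3) (i j : Fin 3) :
    Phi α x i j = cA α * (‖x‖⁻¹ *
      ((if i = j then 1 else 0) + α / (α + 2) * (direction x i * direction x j))) := by
  simp only [Phi, direction]
  ring

lemma isSymbol_Phi (i j : Fin 3) : IsSymbol (-1) (Phi α · i j) := by
  have hconst : IsSymbol 0 fun _ : E3 => if i = j then (1 : ℝ) else 0 :=
    .of_homogeneous contDiffOn_const fun r _ _ => by rw [zpow_zero, one_mul]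
  simpa only [Phi_eq_direction, add_zero] using (isSymbol_norm_inv.mul (hconst.add
    (((isSymbol_direction i).mul (isSymbol_direction j)).const_mul (α / (α + 2))))).const_mul (cA α)

lemma pd_Phi (hx : x ≠ 0) (i j k : Fin 3) :
    pd k (Phi α · i j) x = cA α * (‖x‖⁻¹ ^ 2 *
      (α / (α + 2) * ((if i = k then 1 else 0) * direction x j +
          (if j = k then 1 else 0) * direction x i -
          3 * (direction x i * direction x j * direction x k)) -
        (if i = j then 1 else 0) * direction x k)) := by
  have hdir : ∀ l, DifferentiableAt ℝ (direction · l) x := fun l =>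
    (isSymbol_direction l).differentiableAt hx
  have hρ : DifferentiableAt ℝ (fun y : E3 => ‖y‖⁻¹) x := isSymbol_norm_inv.differentiableAt hx
  simp only [Phi_eq_direction]
  rw [pd_const_mul, pd_mul hρ (by fun_prop), pd_norm_inv hx, pd_add (by fun_prop) (by fun_prop),
    pd_const_mul, pd_mul (hdir i) (hdir j), pd_direction hx, pd_direction hx]
  simp only [pd, fderiv_fun_const, Pi.zero_apply, zero_apply]
  ring

variable {u}

lemma isSymbol_potential (hu : ∀ i, IsSymbol 0 (u · i)) (i : Fin 3) :
    IsSymbol (-1) (potential α u · i) :=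
  .sum fun j _ => (isSymbol_Phi α i j).mul (hu j)

lemma pd_potential (hu : ∀ i, IsSymbol 0 (u · i)) (hx : x ≠ 0) (i k : Fin 3) :
    pd k (potential α u · i) x =
      ∑ j, (Phi α x i j * jacobian u x k j + u x j * pd k (Phi α · i j) x) := by
  have hΦ : ∀ j, DifferentiableAt ℝ (Phi α · i j) x := fun j =>
    (isSymbol_Phi α i j).differentiableAt hx
  have hu' : ∀ j, DifferentiableAt ℝ (u · j) x := fun j => (hu j).differentiableAt hx
  exact (pd_sum (fun j _ => (hΦ j).fun_mul (hu' j)) k).trans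
    (Finset.sum_congr rfl fun j _ => pd_mul (hΦ j) (hu' j) k)

lemma sum_jacobian_mul_pd_potential (hu : ∀ i, IsSymbol 0 (u · i)) (hα : α + 2 ≠ 0) (hx : x ≠ 0) :
    ∑ k, ∑ i, jacobian u x k i * pd k (potential α u · i) x +
        α * (divg u x * ∑ k, pd k (potential α u · k) x) =
      cA α * (‖x‖⁻¹ * energyForm α (jacobian u x) (direction x) -
        ‖x‖⁻¹ ^ 2 * (α / (α + 2) * crossForm (u x) (jacobian u x) (direction x) +
          radialForm α (u x) (jacobian u x) (direction x))) := by
  have htr : divg u x = (jacobian u x).trace := rfl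
  have hβ : α * (α / (α + 2)) = α - 2 * (α / (α + 2)) := by field_simp; ring
  have hω := direction_dotProduct_self hx
  simp only [dotProduct, Fin.sum_univ_three] at hω
  simp only [pd_potential α hu hx, pd_Phi α hx]
  simp only [Phi_eq_direction, htr, energyForm, crossForm, radialForm, Matrix.trace,
    Matrix.diag_apply, Matrix.mulVec, dotProduct, Fin.sum_univ_three, Fin.isValue, Fin.reduceEq,
    if_true, if_false]
  generalize α / (α + 2) = β at *
  linear_combination cA α * ‖x‖⁻¹ ^ 2 *
    (u x 0 * direction x 0 + u x 1 * direction x 1 + u x 2 * direction x 2) *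
    (jacobian u x 0 0 + jacobian u x 1 1 + jacobian u x 2 2) * (hβ - 3 * α * β * hω)

lemma contDiff_pd {f : E3 → ℝ} (hf : ContDiff ℝ 2 f) (k : Fin 3) : ContDiff ℝ 1 (pd k f) :=
  (hf.fderiv_right le_rfl).clm_apply contDiff_const

lemma isSymbol_component (hu : ContDiff ℝ 1 u) (hs : HasCompactSupport u) (i : Fin 3) :
    IsSymbol 0 (u · i) :=
  .of_contDiff_hasCompactSupport (contDiff_pi.1 hu i) (hs.comp_left (g := Function.eval i) rfl)

lemma contDiff_divg (hu : ContDiff ℝ 2 u) : ContDiff ℝ 1 (divg u) :=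
  .sum fun k _ => contDiff_pd (contDiff_pi.1 hu k) k

lemma sum_pd_flux (hu : ContDiff ℝ 2 u) (hs : HasCompactSupport u) (hx : x ≠ 0) :
    ∑ k, pd k (flux α u k) x =
      ∑ k, ∑ i, jacobian u x k i * pd k (potential α u · i) x +
        α * (divg u x * ∑ k, pd k (potential α u · k) x) -
      ∑ i, lame α u x i * potential α u x i := by
  have hW : ∀ i, DifferentiableAt ℝ (potential α u · i) x := fun i =>
    (isSymbol_potential α (isSymbol_component (hu.of_le one_le_two) hs) i).differentiableAt hx
  have hD : ∀ k i, DifferentiableAt ℝ (pd k (u · i)) x := fun k i =>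
    (contDiff_pd (contDiff_pi.1 hu i) k).differentiable one_ne_zero x
  have hdiv : DifferentiableAt ℝ (divg u) x := (contDiff_divg hu).differentiable one_ne_zero x
  have hpd : ∀ k, pd k (flux α u k) x =
      ∑ i, (pd k (u · i) x * pd k (potential α u · i) x +
        potential α u x i * pd k (pd k (u · i)) x) +
      α * (divg u x * pd k (potential α u · k) x + potential α u x k * pd k (divg u) x) := fun k =>
    calc _ = _ := pd_add (.fun_sum fun i _ => (hD k i).fun_mul (hW i))
            ((hdiv.fun_mul (hW k)).const_mul α) k
      _ = _ := by
        rw [pd_sum fun i _ => (hD k i).fun_mul (hW i), pd_const_mul, pd_mul hdiv (hW k)]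
        simp only [pd_mul (hD k _) (hW _)]
  simp only [hpd, lame, lap, jacobian, Matrix.of_apply, Fin.sum_univ_three]
  ring

end EnergyDensity

/-! ### Integration by parts -/

section Orders

variable {E ι : Type*} [NormedAddCommGroup E] [Fintype ι] {m n : ℤ}

lemma HasOrder.dotProduct {a b : E → ι → ℝ} (ha : ∀ i, HasOrder m (a · i))
    (hb : ∀ i, HasOrder n (b · i)) : HasOrder (m + n) fun x => a x ⬝ᵥ b x :=
  .sum fun i _ => (ha i).mul (hb i)

lemma HasOrder.mulVec {M : E → Matrix ι ι ℝ} {b : E → ι → ℝ}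
    (hM : ∀ k i, HasOrder m fun x => M x k i) (hb : ∀ i, HasOrder n (b · i)) (k : ι) :
    HasOrder (m + n) fun x => (M x).mulVec (b x) k :=
  .dotProduct (hM k) hb

variable {a : E3 → Fin 3 → ℝ} {M : E3 → Matrix (Fin 3) (Fin 3) ℝ}

lemma HasOrder.energyForm (α : ℝ) (hM : ∀ k i, HasOrder n fun x => M x k i) :
    HasOrder (n + n) fun x => energyForm α (M x) (direction x) := by
  have hω : ∀ i, HasOrder 0 (direction · i) := fun i => (isSymbol_direction i).hasOrder
  have hn : ∀ k, HasOrder n fun x => (M x).mulVec (direction x) k := by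
    simpa only [add_zero] using HasOrder.mulVec hM hω
  have htr : HasOrder n fun x => (M x).trace := .sum fun i _ => hM i i
  have hωn : HasOrder n fun x => direction x ⬝ᵥ (M x).mulVec (direction x) := by
    simpa only [zero_add] using HasOrder.dotProduct hω hn
  simp only [_root_.energyForm, sq]
  exact (((HasOrder.sum fun k _ => .sum fun i _ => (hM k i).mul (hM k i)).add
    ((HasOrder.dotProduct hn hn).const_mul _)).add ((htr.mul htr).const_mul _)).add
    ((htr.mul hωn).const_mul _)

lemma HasOrder.crossForm (ha : ∀ i, HasOrder m (a · i)) (hM : ∀ k i, HasOrder n fun x => M x k i) :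
    HasOrder (m + n) fun x => crossForm (a x) (M x) (direction x) := by
  have hω : ∀ i, HasOrder 0 (direction · i) := fun i => (isSymbol_direction i).hasOrder
  have hs : HasOrder m fun x => a x ⬝ᵥ direction x := by
    simpa only [add_zero] using HasOrder.dotProduct ha hω
  have hn : ∀ k, HasOrder n fun x => (M x).mulVec (direction x) k := by
    simpa only [add_zero] using HasOrder.mulVec hM hω
  exact (hs.mul (.sum fun i _ => hM i i)).sub (.dotProduct ha hn)

lemma HasOrder.radialForm (α : ℝ) (ha : ∀ i, HasOrder m (a · i))
    (hM : ∀ k i, HasOrder n fun x => M x k i) :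
    HasOrder (n + m) fun x => radialForm α (a x) (M x) (direction x) := by
  have hω : ∀ i, HasOrder 0 (direction · i) := fun i => (isSymbol_direction i).hasOrder
  have hs : HasOrder m fun x => a x ⬝ᵥ direction x := by
    simpa only [add_zero] using HasOrder.dotProduct ha hω
  have hωMω : HasOrder n fun x => direction x ⬝ᵥ (M x).mulVec (direction x) := by
    simpa only [zero_add, add_zero] using HasOrder.dotProduct hω (HasOrder.mulVec hM hω)
  have hωMa : HasOrder (n + m) fun x => direction x ⬝ᵥ (M x).mulVec (a x) := by
    simpa only [zero_add] using HasOrder.dotProduct hω (HasOrder.mulVec hM ha)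
  exact hωMa.add (by simpa only [add_comm n] using (hs.mul hωMω).const_mul _)

end Orders

section IntegrationByParts

variable {α : ℝ} {u v : E3 → Fin 3 → ℝ} {m n : ℤ} {x : E3}

lemma jacobian_eq_zero_of_notMem_tsupport (hx : x ∉ tsupport u) : jacobian u x = 0 := by
  ext k i
  have h : x ∉ tsupport (u · i) := fun h =>
    hx (tsupport_comp_subset (g := Function.eval i) rfl u h)
  simp only [jacobian, pd, Matrix.of_apply, fderiv_of_notMem_tsupport ℝ h, zero_apply,
    Matrix.zero_apply]

lemma hasOrder_jacobian (hu : ∀ i, IsSymbol n (u · i)) (k i : Fin 3) :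
    HasOrder (n - 1) fun x => jacobian u x k i :=
  (hu i).hasOrder_fderiv.clm_apply _

lemma hasCompactSupport_of_jacobian_eq_zero {f : E3 → ℝ} (hs : HasCompactSupport u)
    (h : ∀ x, u x = 0 → jacobian u x = 0 → f x = 0) : HasCompactSupport f :=
  .intro hs fun x hx => h x (image_eq_zero_of_notMem_tsupport hx)
    (jacobian_eq_zero_of_notMem_tsupport hx)

/-- The antisymmetric field `|x|⁻² ((u·ω) v - (v·ω) u)`, whose divergence compares the two cross
terms of `u` and `v`. -/
def crossFlux (u v : E3 → Fin 3 → ℝ) (k : Fin 3) (x : E3) : ℝ :=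
  ‖x‖⁻¹ * (‖x‖⁻¹ * ∑ j, direction x j * (u x j * v x k - v x j * u x k))

lemma isSymbol_crossFlux (hu : ∀ i, IsSymbol m (u · i)) (hv : ∀ i, IsSymbol n (v · i))
    (k : Fin 3) : IsSymbol (m + n - 2) (crossFlux u v k) := by
  have h : ∀ j, IsSymbol (0 + (m + n)) fun x => direction x j * (u x j * v x k - v x j * u x k) :=
    fun j => (isSymbol_direction j).mul
      (((hu j).mul (hv k)).sub (add_comm n m ▸ (hv j).mul (hu k)))
  convert! isSymbol_norm_inv.mul (isSymbol_norm_inv.mul (IsSymbol.sum fun j _ => h j)) using 1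
  ring

lemma sum_pd_crossFlux (hu : ∀ i, IsSymbol m (u · i)) (hv : ∀ i, IsSymbol n (v · i))
    (hx : x ≠ 0) :
    ∑ k, pd k (crossFlux u v k) x =
      ‖x‖⁻¹ ^ 2 * (crossForm (u x) (jacobian v x) (direction x) -
        crossForm (v x) (jacobian u x) (direction x)) := by
  have hρ : DifferentiableAt ℝ (fun y : E3 => ‖y‖⁻¹) x := isSymbol_norm_inv.differentiableAt hx
  have hω : ∀ j, DifferentiableAt ℝ (direction · j) x := fun j =>
    (isSymbol_direction j).differentiableAt hx
  have hu' : ∀ i, DifferentiableAt ℝ (u · i) x := fun i => (hu i).differentiableAt hx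
  have hv' : ∀ i, DifferentiableAt ℝ (v · i) x := fun i => (hv i).differentiableAt hx
  have hanti : ∀ j k, DifferentiableAt ℝ (fun y => u y j * v y k - v y j * u y k) x := fun j k =>
    ((hu' j).fun_mul (hv' k)).fun_sub ((hv' j).fun_mul (hu' k))
  have hsum : ∀ k, DifferentiableAt ℝ
      (fun y => ∑ j, direction y j * (u y j * v y k - v y j * u y k)) x := fun k =>
    .fun_sum fun j _ => (hω j).fun_mul (hanti j k)
  unfold crossFlux
  simp only [pd_mul hρ (hρ.fun_mul (hsum _)), pd_mul hρ (hsum _),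
    pd_sum fun j _ => (hω j).fun_mul (hanti j _), pd_mul (hω _) (hanti _ _),
    pd_sub ((hu' _).fun_mul (hv' _)) ((hv' _).fun_mul (hu' _)), pd_mul (hu' _) (hv' _),
    pd_mul (hv' _) (hu' _), pd_norm_inv hx, pd_direction hx]
  simp only [crossForm, jacobian, Matrix.trace, Matrix.diag_apply, Matrix.mulVec, Matrix.of_apply,
    dotProduct, Fin.sum_univ_three, Fin.isValue, Fin.reduceEq, if_true, if_false]
  ring

lemma HasOrder.norm_inv_mul {f : E3 → ℝ} (hf : HasOrder n f) :
    HasOrder (-1 + n) fun x => ‖x‖⁻¹ * f x :=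
  isSymbol_norm_inv.hasOrder.mul hf

lemma HasOrder.norm_inv_sq_mul {f : E3 → ℝ} (hf : HasOrder n f) :
    HasOrder (-2 + n) fun x => ‖x‖⁻¹ ^ 2 * f x := by
  rw [show -2 + n = -1 + (-1 + n) by ring]
  simpa only [sq, mul_assoc] using hf.norm_inv_mul.norm_inv_mul

lemma integrable_sum_pd {F : Fin 3 → E3 → ℝ} (hF : ∀ k, IsSymbol n (F k))
    (hs : ∀ k, HasCompactSupport (F k)) (hn : -2 < n) :
    Integrable fun x => ∑ k, pd k (F k) x :=
  integrable_finsetSum _ fun k _ => (hF k).integrable_fderiv_apply (hs k) (by simpa using hn) _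

lemma integral_sum_pd_eq_zero {F : Fin 3 → E3 → ℝ} (hF : ∀ k, IsSymbol n (F k))
    (hs : ∀ k, HasCompactSupport (F k)) (hn : -2 < n) : ∫ x, ∑ k, pd k (F k) x = 0 := by
  have hn' : 1 - (Module.finrank ℝ E3 : ℤ) < n := by simpa using hn
  calc _ = ∑ k, ∫ x, pd k (F k) x :=
        integral_finsetSum _ fun k _ => (hF k).integrable_fderiv_apply (hs k) hn' _
    _ = 0 := Finset.sum_eq_zero fun k _ =>
        (hF k).integral_fderiv_apply_eq_zero (by simp) (hs k) hn' _

lemma integral_crossForm_comm (hu : ∀ i, IsSymbol m (u · i)) (hv : ∀ i, IsSymbol n (v · i))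
    (hs : HasCompactSupport u) (hmn : 0 < m + n) :
    ∫ x, ‖x‖⁻¹ ^ 2 * crossForm (u x) (jacobian v x) (direction x) =
      ∫ x, ‖x‖⁻¹ ^ 2 * crossForm (v x) (jacobian u x) (direction x) := by
  have huv : Integrable fun x => ‖x‖⁻¹ ^ 2 * crossForm (u x) (jacobian v x) (direction x) :=
    (HasOrder.crossForm (fun i => (hu i).hasOrder)
      (hasOrder_jacobian hv)).norm_inv_sq_mul.integrable
      (hasCompactSupport_of_jacobian_eq_zero hs fun x h _ => by simp [crossForm, h]) (by simp; lia)
  have hvu : Integrable fun x => ‖x‖⁻¹ ^ 2 * crossForm (v x) (jacobian u x) (direction x) :=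
    (HasOrder.crossForm (fun i => (hv i).hasOrder)
      (hasOrder_jacobian hu)).norm_inv_sq_mul.integrable
      (hasCompactSupport_of_jacobian_eq_zero hs fun x _ h => by simp [crossForm, h]) (by simp; lia)
  rw [← sub_eq_zero, ← integral_sub huv hvu]
  have hflux : ∀ k, HasCompactSupport (crossFlux u v k) := fun k =>
    hasCompactSupport_of_jacobian_eq_zero hs fun x h _ => by simp [crossFlux, h]
  rw [← integral_sum_pd_eq_zero (isSymbol_crossFlux hu hv) hflux (by lia)]
  refine integral_congr_ae ?_
  filter_upwards [Measure.ae_ne volume 0] with x hx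
  rw [sum_pd_crossFlux hu hv hx, mul_sub]

lemma hasOrder_jacobian_of_contDiff (hu : ContDiff ℝ 1 u) (hs : HasCompactSupport u)
    (k i : Fin 3) : HasOrder 0 fun x => jacobian u x k i :=
  .of_continuous_hasCompactSupport
    (((contDiff_pi.1 hu i).continuous_fderiv one_ne_zero).clm_apply continuous_const)
    (hasCompactSupport_of_jacobian_eq_zero hs fun x _ h => by rw [h, Matrix.zero_apply])

lemma isSymbol_jacobian (hu : ContDiff ℝ 2 u) (hs : HasCompactSupport u) (k i : Fin 3) :
    IsSymbol 0 fun x => jacobian u x k i :=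
  .of_contDiff_hasCompactSupport (contDiff_pd (contDiff_pi.1 hu i) k)
    (hasCompactSupport_of_jacobian_eq_zero hs fun x _ h => by rw [h, Matrix.zero_apply])

lemma isSymbol_flux (hu : ContDiff ℝ 2 u) (hs : HasCompactSupport u) (k : Fin 3) :
    IsSymbol (-1) (flux α u k) := by
  have hW := isSymbol_potential α (isSymbol_component (hu.of_le one_le_two) hs)
  have h : IsSymbol (0 + -1) (flux α u k) :=
    (IsSymbol.sum fun i _ => (isSymbol_jacobian hu hs k i).mul (hW i)).add
      (((IsSymbol.sum fun i _ => isSymbol_jacobian hu hs i i).mul (hW k)).const_mul α)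
  rwa [zero_add] at h

lemma lame_mul_potential_eq (hu : ContDiff ℝ 2 u) (hs : HasCompactSupport u) (hα : α + 2 ≠ 0)
    (hx : x ≠ 0) :
    ∑ i, ∑ j, lame α u x i * Phi α x i j * u x j =
      cA α * (‖x‖⁻¹ * energyForm α (jacobian u x) (direction x) -
        (α / (α + 2) * (‖x‖⁻¹ ^ 2 * crossForm (u x) (jacobian u x) (direction x)) +
          ‖x‖⁻¹ ^ 2 * radialForm α (u x) (jacobian u x) (direction x))) -
      ∑ k, pd k (flux α u k) x := by
  have hW : ∑ i, ∑ j, lame α u x i * Phi α x i j * u x j =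
      ∑ i, lame α u x i * potential α u x i := by
    simp only [potential, Finset.mul_sum, mul_assoc]
  rw [hW, sum_pd_flux α hu hs hx, sum_jacobian_mul_pd_potential α
    (isSymbol_component (hu.of_le one_le_two) hs) hα hx]
  ring

lemma integrable_norm_inv_mul_energyForm (α : ℝ) (hs : HasCompactSupport u)
    (hJ : ∀ k i, HasOrder 0 fun x => jacobian u x k i) :
    Integrable fun x => ‖x‖⁻¹ * energyForm α (jacobian u x) (direction x) :=
  (HasOrder.energyForm α hJ).norm_inv_mul.integrable
    (hasCompactSupport_of_jacobian_eq_zero hs fun x _ h => by simp [energyForm, h]) (by simp)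

lemma integrable_norm_inv_sq_mul_crossForm (hs : HasCompactSupport u)
    (hu : ∀ i, HasOrder m (u · i)) (hJ : ∀ k i, HasOrder n fun x => jacobian u x k i)
    (hmn : -1 < m + n) :
    Integrable fun x => ‖x‖⁻¹ ^ 2 * crossForm (u x) (jacobian u x) (direction x) :=
  (HasOrder.crossForm hu hJ).norm_inv_sq_mul.integrable
    (hasCompactSupport_of_jacobian_eq_zero hs fun x _ h => by simp [crossForm, h]) (by simp; lia)

lemma integrable_norm_inv_sq_mul_radialForm (α : ℝ) (hs : HasCompactSupport u)
    (hu : ∀ i, HasOrder 0 (u · i)) (hJ : ∀ k i, HasOrder 0 fun x => jacobian u x k i) :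
    Integrable fun x => ‖x‖⁻¹ ^ 2 * radialForm α (u x) (jacobian u x) (direction x) :=
  (HasOrder.radialForm α hu hJ).norm_inv_sq_mul.integrable
    (hasCompactSupport_of_jacobian_eq_zero hs fun x _ h => by simp [radialForm, h]) (by simp)

theorem integral_lame_mul_potential (hu : ContDiff ℝ 2 u) (hs : HasCompactSupport u)
    (hα : α + 2 ≠ 0) :
    ∫ x, ∑ i, ∑ j, lame α u x i * Phi α x i j * u x j =
      cA α * ((∫ x, ‖x‖⁻¹ * energyForm α (jacobian u x) (direction x)) -
        (α / (α + 2) * (∫ x, ‖x‖⁻¹ ^ 2 * crossForm (u x) (jacobian u x) (direction x)) +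
          ∫ x, ‖x‖⁻¹ ^ 2 * radialForm α (u x) (jacobian u x) (direction x))) := by
  have hu' := fun i => (isSymbol_component (hu.of_le one_le_two) hs i).hasOrder
  have hJ := hasOrder_jacobian_of_contDiff (hu.of_le one_le_two) hs
  have henergy := integrable_norm_inv_mul_energyForm α hs hJ
  have hcross := integrable_norm_inv_sq_mul_crossForm hs hu' hJ (by norm_num)
  have hradial := integrable_norm_inv_sq_mul_radialForm α hs hu' hJ
  have hflux : ∀ k, HasCompactSupport (flux α u k) := fun k =>
    hasCompactSupport_of_jacobian_eq_zero hs fun x h _ => by simp [flux, potential, h]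
  have hdensity : Integrable fun x => ‖x‖⁻¹ * energyForm α (jacobian u x) (direction x) -
      (α / (α + 2) * (‖x‖⁻¹ ^ 2 * crossForm (u x) (jacobian u x) (direction x)) +
        ‖x‖⁻¹ ^ 2 * radialForm α (u x) (jacobian u x) (direction x)) :=
    henergy.sub ((hcross.const_mul _).add hradial)
  calc ∫ x, ∑ i, ∑ j, lame α u x i * Phi α x i j * u x j
    _ = ∫ x, (cA α * (‖x‖⁻¹ * energyForm α (jacobian u x) (direction x) -
          (α / (α + 2) * (‖x‖⁻¹ ^ 2 * crossForm (u x) (jacobian u x) (direction x)) +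
            ‖x‖⁻¹ ^ 2 * radialForm α (u x) (jacobian u x) (direction x))) -
          ∑ k, pd k (flux α u k) x) := by
        refine integral_congr_ae ?_
        filter_upwards [Measure.ae_ne volume 0] with x hx
        exact lame_mul_potential_eq hu hs hα hx
    _ = cA α * ∫ x, (‖x‖⁻¹ * energyForm α (jacobian u x) (direction x) -
          (α / (α + 2) * (‖x‖⁻¹ ^ 2 * crossForm (u x) (jacobian u x) (direction x)) +
            ‖x‖⁻¹ ^ 2 * radialForm α (u x) (jacobian u x) (direction x))) := by
        rw [integral_sub (hdensity.const_mul _)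
          (integrable_sum_pd (isSymbol_flux hu hs) hflux (by lia)),
          integral_sum_pd_eq_zero (isSymbol_flux hu hs) hflux (by lia), sub_zero,
          integral_const_mul]
    _ = _ := by
        rw [integral_sub henergy (by exact (hcross.const_mul _).add hradial),
          integral_add (hcross.const_mul _) hradial, integral_const_mul]

end IntegrationByParts

/-! ### The radial term -/

section RadialTerm

variable {u : E3 → Fin 3 → ℝ}

instance : IsFiniteMeasure sphMeas := inferInstanceAs (IsFiniteMeasure volume.toSphere)

lemma sphMeas_real_univ : sphMeas.real Set.univ = 4 * π := by
  rw [sphMeas, Measure.toSphere_real_apply_univ, measureReal_def,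
    EuclideanSpace.volume_ball_fin_three, ENNReal.ofReal_one, one_pow, one_mul,
    ENNReal.toReal_ofReal (by positivity), finrank_euclideanSpace_fin]
  norm_num
  ring

lemma integral_dotProduct_sq_sphMeas (a : Fin 3 → ℝ) :
    ∫ ω : sphere (0 : E3) 1, (a ⬝ᵥ ω.1) ^ 2 ∂sphMeas = 4 * π / 3 * (a ⬝ᵥ a) := by
  have h := finrank_mul_average_inner_sq (WithLp.toLp 2 a : E3)
  have hinner : ∀ ω : E3, inner ℝ (WithLp.toLp 2 a : E3) ω = a ⬝ᵥ ω := fun ω => by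
    simp [EuclideanSpace.inner_eq_star_dotProduct, dotProduct_comm]
  rw [finrank_euclideanSpace_fin, average_eq, ← sphMeas, sphMeas_real_univ,
    EuclideanSpace.real_norm_sq_eq, smul_eq_mul, Nat.cast_ofNat] at h
  simp only [hinner] at h
  rw [dotProduct]
  simp only [← sq]
  rw [← h]
  field_simp

lemma hasDerivAt_comp_smul {f : E3 → ℝ} (hf : ContDiff ℝ 1 f) (ω : E3) (r : ℝ) :
    HasDerivAt (fun s : ℝ => f (s • ω)) (∑ k, ω k * pd k f (r • ω)) r := by
  have hline : HasDerivAt (fun s : ℝ => s • ω) ω r := by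
    simpa using (hasDerivAt_id r).smul_const ω
  rw [← fderiv_eq_sum_pd]
  exact (hf.differentiable one_ne_zero _).hasFDerivAt.comp_hasDerivAt r hline

/-- The primitive of `radialForm` along the ray in direction `ω`. -/
def radialPrimitive (α : ℝ) (a ω : Fin 3 → ℝ) : ℝ :=
  (a ⬝ᵥ a + 3 * (α / (α + 2)) * (a ⬝ᵥ ω) ^ 2) / 2

lemma hasDerivAt_radialPrimitive (α : ℝ) (hu : ContDiff ℝ 1 u) (ω : E3) (r : ℝ) :
    HasDerivAt (fun s : ℝ => radialPrimitive α (u (s • ω)) ω)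
      (radialForm α (u (r • ω)) (jacobian u (r • ω)) ω) r := by
  have hcomp := fun i => hasDerivAt_comp_smul (contDiff_pi.1 hu i) ω r
  have hnorm := HasDerivAt.fun_sum fun i (_ : i ∈ Finset.univ) => (hcomp i).fun_mul (hcomp i)
  have hdir := HasDerivAt.fun_sum fun i (_ : i ∈ Finset.univ) => (hcomp i).mul_const (ω i)
  convert! ((hnorm.add ((hdir.fun_pow 2).const_mul (3 * (α / (α + 2))))).div_const 2) using 1
  simp only [radialForm, jacobian, Matrix.mulVec, Matrix.of_apply, dotProduct, Fin.sum_univ_three,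
    Fin.isValue]
  ring

lemma integral_Ioi_radialForm (α : ℝ) (hu : ContDiff ℝ 1 u) (hs : HasCompactSupport u)
    (ω : sphere (0 : E3) 1) :
    ∫ r in Set.Ioi (0 : ℝ), radialForm α (u (r • ω.1)) (jacobian u (r • ω.1)) ω.1 =
      -radialPrimitive α (u 0) ω.1 := by
  have hsmooth : ContDiff ℝ 1 fun s : ℝ => radialPrimitive α (u (s • ω.1)) ω.1 := by
    have : ∀ i, ContDiff ℝ 1 fun s : ℝ => u (s • ω.1) i := fun i =>
      (contDiff_pi.1 hu i).comp (by fun_prop)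
    simp only [radialPrimitive, dotProduct]
    fun_prop
  have hsupp : HasCompactSupport fun s : ℝ => radialPrimitive α (u (s • ω.1)) ω.1 :=
    (hs.comp_isClosedEmbedding (isClosedEmbedding_smul_left
      (ne_of_mem_sphere ω.2 one_ne_zero))).comp_left (g := (radialPrimitive α · ω.1))
      (by simp [radialPrimitive])
  have h := hsupp.integral_Ioi_deriv_eq hsmooth 0
  simpa only [(hasDerivAt_radialPrimitive α hu ω.1 _).deriv, zero_smul] using h

theorem integral_norm_inv_sq_mul_radialForm (α : ℝ) (hu : ContDiff ℝ 1 u)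
    (hs : HasCompactSupport u) :
    ∫ x, ‖x‖⁻¹ ^ 2 * radialForm α (u x) (jacobian u x) (direction x) =
      -(2 * π * (1 + α / (α + 2)) * (u 0 ⬝ᵥ u 0)) := by
  have hint := integrable_norm_inv_sq_mul_radialForm α hs
    (fun i => (isSymbol_component hu hs i).hasOrder) (hasOrder_jacobian_of_contDiff hu hs)
  have hpolar : ∀ ω : sphere (0 : E3) 1, ∫ r in Set.Ioi (0 : ℝ),
      r ^ (Module.finrank ℝ E3 - 1) • (‖r • ω.1‖⁻¹ ^ 2 * radialForm α (u (r • ω.1))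
        (jacobian u (r • ω.1)) (direction (r • ω.1))) = -radialPrimitive α (u 0) ω.1 := fun ω => by
    rw [← integral_Ioi_radialForm α hu hs ω]
    refine setIntegral_congr_fun measurableSet_Ioi fun r hr => ?_
    have hr' : r ≠ 0 := ne_of_gt hr
    simp only [direction_smul hr, norm_smul, norm_eq_of_mem_sphere, mul_one,
      norm_of_nonneg (le_of_lt hr), finrank_euclideanSpace_fin, smul_eq_mul]
    field_simp
  rw [integral_eq_integral_sphere_Ioi hint, ← sphMeas]
  simp only [hpolar, radialPrimitive]
  rw [integral_neg, integral_div, integral_add (integrable_const _)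
    (integrable_of_continuous_of_compactSpace (by fun_prop)), integral_const, integral_const_mul,
    integral_dotProduct_sq_sphMeas, sphMeas_real_univ, smul_eq_mul]
  ring

end RadialTerm

/-! ### The quadratic forms on a sphere -/

section QuadraticForms

/-- The Frobenius norm `(∑ₖ ∑ᵢ Mₖᵢ²)^{1/2}`. -/
def frobeniusNorm {m n : Type*} [Fintype m] [Fintype n] (M : Matrix m n ℝ) : ℝ :=
  √(∑ k, ∑ i, M k i ^ 2)

section Frobenius

variable {m n : Type*} [Fintype m] [Fintype n]

lemma frobeniusNorm_nonneg (M : Matrix m n ℝ) : 0 ≤ frobeniusNorm M := sqrt_nonneg _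

lemma frobeniusNorm_sq (M : Matrix m n ℝ) : frobeniusNorm M ^ 2 = ∑ k, ∑ i, M k i ^ 2 :=
  sq_sqrt (by positivity)

lemma abs_dotProduct_le (a b : n → ℝ) : |a ⬝ᵥ b| ≤ √(a ⬝ᵥ a) * √(b ⬝ᵥ b) := by
  have ha : 0 ≤ a ⬝ᵥ a := Finset.sum_nonneg fun i _ => mul_self_nonneg (a i)
  rw [← sqrt_mul ha]
  refine abs_le_sqrt ?_
  simpa only [dotProduct, ← sq] using Finset.sum_mul_sq_le_sq_mul_sq Finset.univ a b

lemma sqrt_mulVec_dotProduct_self_le (M : Matrix m n ℝ) (b : n → ℝ) :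
    √(M.mulVec b ⬝ᵥ M.mulVec b) ≤ frobeniusNorm M * √(b ⬝ᵥ b) := by
  rw [frobeniusNorm, ← sqrt_mul (by positivity)]
  refine sqrt_le_sqrt ?_
  rw [Finset.sum_mul, dotProduct]
  refine Finset.sum_le_sum fun k _ => ?_
  simpa only [Matrix.mulVec, dotProduct, ← sq] using
    Finset.sum_mul_sq_le_sq_mul_sq Finset.univ (M k) b

lemma abs_dotProduct_mulVec_le (a : m → ℝ) (M : Matrix m n ℝ) (b : n → ℝ) :
    |a ⬝ᵥ M.mulVec b| ≤ √(a ⬝ᵥ a) * (frobeniusNorm M * √(b ⬝ᵥ b)) :=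
  (abs_dotProduct_le a _).trans
    (mul_le_mul_of_nonneg_left (sqrt_mulVec_dotProduct_self_le M b) (sqrt_nonneg _))

end Frobenius

variable {α : ℝ} {ω : Fin 3 → ℝ}

lemma crossForm_add_vecMulVec (a A : Fin 3 → ℝ) (M : Matrix (Fin 3) (Fin 3) ℝ) :
    crossForm a (M + Matrix.vecMulVec ω A) ω = crossForm a M ω := by
  rw [crossForm, crossForm, Matrix.trace_add, Matrix.trace_vecMulVec, Matrix.add_mulVec,
    dotProduct_add, Matrix.vecMulVec_mulVec]
  simp only [dotProduct_smul, MulOpposite.smul_eq_mul_unop, MulOpposite.unop_op,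
    dotProduct_comm ω A]
  ring

lemma crossForm_le (hω : ω ⬝ᵥ ω = 1) (a : Fin 3 → ℝ) (M : Matrix (Fin 3) (Fin 3) ℝ) :
    crossForm a M ω ≤ √(a ⬝ᵥ a) * |M.trace| + √(a ⬝ᵥ a) * frobeniusNorm M := by
  have hdot := abs_dotProduct_le a ω
  have hmul := abs_dotProduct_mulVec_le a M ω
  rw [hω, sqrt_one, mul_one] at hdot hmul
  calc crossForm a M ω ≤ |a ⬝ᵥ ω| * |M.trace| + |a ⬝ᵥ M.mulVec ω| := by
        rw [← abs_mul]
        exact (sub_eq_add_neg _ _).trans_le (add_le_add (le_abs_self _) (neg_le_abs _))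
    _ ≤ _ := by gcongr

lemma energyForm_add_vecMulVec (hα : α + 2 ≠ 0) (hω : ω ⬝ᵥ ω = 1) (A : Fin 3 → ℝ)
    (M : Matrix (Fin 3) (Fin 3) ℝ) :
    energyForm α (M + Matrix.vecMulVec ω A) ω =
      energyForm α M ω + 2 * (A ⬝ᵥ M.vecMul ω) + A ⬝ᵥ A +
        (α + α / (α + 2) + α * (α / (α + 2))) * (A ⬝ᵥ ω) ^ 2 +
        α * ((ω ⬝ᵥ M.mulVec ω) * (A ⬝ᵥ ω)) +
        (2 * α + α * (α / (α + 2))) * (M.trace * (A ⬝ᵥ ω)) := by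
  have hsum : ∑ k, ∑ i, (M + Matrix.vecMulVec ω A) k i ^ 2 =
      ∑ k, ∑ i, M k i ^ 2 + 2 * (A ⬝ᵥ M.vecMul ω) + A ⬝ᵥ A * (ω ⬝ᵥ ω) := by
    simp only [Matrix.add_apply, Matrix.vecMulVec_apply, dotProduct, Matrix.vecMul,
      Fin.sum_univ_three]
    ring
  have hmul : (M + Matrix.vecMulVec ω A).mulVec ω = M.mulVec ω + (A ⬝ᵥ ω) • ω := by
    rw [Matrix.add_mulVec, Matrix.vecMulVec_mulVec]
    ext i
    simp [mul_comm]
  have hβ : α / (α + 2) * (α + 2) = α := div_mul_cancel₀ α hα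
  simp only [energyForm, hsum, hmul, Matrix.trace_add, Matrix.trace_vecMulVec, dotProduct_add,
    add_dotProduct, dotProduct_smul, smul_dotProduct, smul_eq_mul, hω, dotProduct_comm ω A,
    dotProduct_comm (M.mulVec ω) ω]
  linear_combination ((A ⬝ᵥ ω) * (ω ⬝ᵥ M.mulVec ω)) * hβ

lemma le_energyForm_add_vecMulVec (hα : 0 ≤ α) (hω : ω ⬝ᵥ ω = 1) (A : Fin 3 → ℝ)
    (M : Matrix (Fin 3) (Fin 3) ℝ) :
    frobeniusNorm M ^ 2 + 2 * (A ⬝ᵥ M.vecMul ω) + A ⬝ᵥ A +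
        (α + α / (α + 2) + α * (α / (α + 2))) * (A ⬝ᵥ ω) ^ 2 + α * M.trace ^ 2 -
        α * (frobeniusNorm M * |A ⬝ᵥ ω|) -
        (2 * α + α * (α / (α + 2))) * (|M.trace| * |A ⬝ᵥ ω|) -
        α * (α / (α + 2)) * (|M.trace| * frobeniusNorm M) ≤
      energyForm α (M + Matrix.vecMulVec ω A) ω := by
  have hradial := abs_dotProduct_mulVec_le ω M ω
  rw [hω, sqrt_one, mul_one, one_mul] at hradial
  have hsq : 0 ≤ α / (α + 2) * (M.mulVec ω ⬝ᵥ M.mulVec ω) :=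
    mul_nonneg (by positivity) (Finset.sum_nonneg fun i _ => mul_self_nonneg _)
  have hνs : -(frobeniusNorm M * |A ⬝ᵥ ω|) ≤ (ω ⬝ᵥ M.mulVec ω) * (A ⬝ᵥ ω) := by
    refine neg_le.1 ((neg_le_abs _).trans ?_)
    rw [abs_mul]
    gcongr
  have hms : -(|M.trace| * |A ⬝ᵥ ω|) ≤ M.trace * (A ⬝ᵥ ω) := by
    rw [← abs_mul]
    exact neg_abs_le _
  have hmν : -(|M.trace| * frobeniusNorm M) ≤ M.trace * (ω ⬝ᵥ M.mulVec ω) := by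
    refine neg_le.1 ((neg_le_abs _).trans ?_)
    rw [abs_mul]
    gcongr
  rw [energyForm_add_vecMulVec (by positivity) hω, energyForm, frobeniusNorm_sq]
  linear_combination α * hνs + (2 * α + α * (α / (α + 2))) * hms + α * (α / (α + 2)) * hmν + hsq

end QuadraticForms

/-! ### The inequality on a sphere -/

section SphereInequality

lemma integral_abs_mul_abs_le_sqrt_mul_sqrt {X : Type*} [MeasurableSpace X] {μ : Measure X}
    {f g : X → ℝ} (hf : MemLp f 2 μ) (hg : MemLp g 2 μ) :
    ∫ x, |f x| * |g x| ∂μ ≤ √(∫ x, f x ^ 2 ∂μ) * √(∫ x, g x ^ 2 ∂μ) := by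
  have h := integral_mul_norm_le_Lp_mul_Lq (μ := μ) (f := f) (g := g) HolderConjugate.two_two
    (by simpa using hf) (by simpa using hg)
  simpa only [norm_eq_abs, rpow_two, sq_abs, ← sqrt_eq_rpow] using h

variable {α r : ℝ} {A : Fin 3 → ℝ} {a : sphere (0 : E3) 1 → Fin 3 → ℝ}
  {M : sphere (0 : E3) 1 → Matrix (Fin 3) (Fin 3) ℝ}

/-- The vector of the `L²` norms over the sphere of `A`, `M` and `tr M`. -/
def sphereNorms (A : Fin 3 → ℝ) (M : sphere (0 : E3) 1 → Matrix (Fin 3) (Fin 3) ℝ) : Fin 3 → ℝ :=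
  ![√(4 * π * (A ⬝ᵥ A)), √(∫ ω, frobeniusNorm (M ω) ^ 2 ∂sphMeas),
    √(∫ ω, (M ω).trace ^ 2 ∂sphMeas)]

lemma sphereNorms_nonneg (A : Fin 3 → ℝ) (M : sphere (0 : E3) 1 → Matrix (Fin 3) (Fin 3) ℝ)
    (i : Fin 3) : 0 ≤ sphereNorms A M i := by
  fin_cases i <;> exact sqrt_nonneg _

lemma sphere_dotProduct_self (ω : sphere (0 : E3) 1) : (ω.1 : Fin 3 → ℝ) ⬝ᵥ ω.1 = 1 := by
  simpa only [dotProduct, sq, norm_eq_of_mem_sphere, mul_one, eq_comm] using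
    EuclideanSpace.real_norm_sq_eq ω.1

lemma memLp_two_sphMeas {f : sphere (0 : E3) 1 → ℝ} (hf : Continuous f) : MemLp f 2 sphMeas :=
  (memLp_two_iff_integrable_sq hf.aestronglyMeasurable).2
    (integrable_of_continuous_of_compactSpace (hf.pow 2))

lemma continuous_frobeniusNorm {X m n : Type*} [TopologicalSpace X] [Fintype m] [Fintype n]
    {M : X → Matrix m n ℝ} (hM : Continuous M) : Continuous fun x => frobeniusNorm (M x) := by
  unfold frobeniusNorm
  fun_prop

lemma integral_dotProduct_vecMul_eq_zero (A : Fin 3 → ℝ) (hM : Continuous M)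
    (hmean : ∀ i, ∫ ω, (M ω).vecMul ω.1 i ∂sphMeas = 0) :
    ∫ ω, A ⬝ᵥ (M ω).vecMul ω.1 ∂sphMeas = 0 := by
  simp only [dotProduct]
  rw [integral_finsetSum _ fun i _ => integrable_of_continuous_of_compactSpace (by fun_prop)]
  exact Finset.sum_eq_zero fun i _ => by rw [integral_const_mul, hmean, mul_zero]

lemma sphereNorms_zero_sq (A : Fin 3 → ℝ) (M : sphere (0 : E3) 1 → Matrix (Fin 3) (Fin 3) ℝ) :
    sphereNorms A M 0 ^ 2 = 4 * π * (A ⬝ᵥ A) :=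
  sq_sqrt (mul_nonneg (by positivity) (Finset.sum_nonneg fun i _ => mul_self_nonneg _))

lemma sphereNorms_one_sq (A : Fin 3 → ℝ) (M : sphere (0 : E3) 1 → Matrix (Fin 3) (Fin 3) ℝ) :
    sphereNorms A M 1 ^ 2 = ∫ ω, frobeniusNorm (M ω) ^ 2 ∂sphMeas :=
  sq_sqrt (integral_nonneg fun _ => sq_nonneg _)

lemma sphereNorms_two_sq (A : Fin 3 → ℝ) (M : sphere (0 : E3) 1 → Matrix (Fin 3) (Fin 3) ℝ) :
    sphereNorms A M 2 ^ 2 = ∫ ω, (M ω).trace ^ 2 ∂sphMeas :=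
  sq_sqrt (integral_nonneg fun _ => sq_nonneg _)

lemma sqrt_integral_dotProduct_sq (A : Fin 3 → ℝ)
    (M : sphere (0 : E3) 1 → Matrix (Fin 3) (Fin 3) ℝ) :
    √(∫ ω : sphere (0 : E3) 1, (A ⬝ᵥ ω.1) ^ 2 ∂sphMeas) = sphereNorms A M 0 / √3 := by
  rw [integral_dotProduct_sq_sphMeas, div_mul_eq_mul_div, sqrt_div' _ zero_le_three]
  rfl

theorem le_integral_energyForm_add_vecMulVec (hα : 0 ≤ α) (A : Fin 3 → ℝ) (hM : Continuous M)
    (hmean : ∀ i, ∫ ω, (M ω).vecMul ω.1 i ∂sphMeas = 0) :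
    (1 + (α + α / (α + 2) + α * (α / (α + 2))) / 3) * sphereNorms A M 0 ^ 2 +
        sphereNorms A M 1 ^ 2 + α * sphereNorms A M 2 ^ 2 -
        α * (sphereNorms A M 1 * (sphereNorms A M 0 / √3)) -
        (2 * α + α * (α / (α + 2))) * (sphereNorms A M 2 * (sphereNorms A M 0 / √3)) -
        α * (α / (α + 2)) * (sphereNorms A M 2 * sphereNorms A M 1) ≤
      ∫ ω, energyForm α (M ω + Matrix.vecMulVec ω.1 A) ω.1 ∂sphMeas := by
  have hfrob := continuous_frobeniusNorm hM
  have hdir : Continuous fun ω : sphere (0 : E3) 1 => A ⬝ᵥ ω.1 := by fun_prop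
  have hFs := integral_abs_mul_abs_le_sqrt_mul_sqrt (memLp_two_sphMeas hfrob)
    (memLp_two_sphMeas hdir)
  have hms := integral_abs_mul_abs_le_sqrt_mul_sqrt (memLp_two_sphMeas hM.matrix_trace)
    (memLp_two_sphMeas hdir)
  have hmF := integral_abs_mul_abs_le_sqrt_mul_sqrt (memLp_two_sphMeas hM.matrix_trace)
    (memLp_two_sphMeas hfrob)
  rw [sqrt_integral_dotProduct_sq A M] at hFs hms
  simp only [abs_of_nonneg (frobeniusNorm_nonneg _)] at hFs hmF
  change _ ≤ sphereNorms A M 1 * _ at hFs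
  change _ ≤ sphereNorms A M 2 * _ at hms
  change _ ≤ sphereNorms A M 2 * sphereNorms A M 1 at hmF
  refine le_trans ?_ (integral_mono (integrable_of_continuous_of_compactSpace ?_)
    (integrable_of_continuous_of_compactSpace ?_)
    fun ω => le_energyForm_add_vecMulVec hα (sphere_dotProduct_self ω) A (M ω))
  · rw [integral_sub, integral_sub, integral_sub, integral_add, integral_add, integral_add,
      integral_add]
    · simp only [integral_const_mul, integral_const, integral_dotProduct_vecMul_eq_zero A hM hmean,
        ← sphereNorms_one_sq A M, ← sphereNorms_two_sq A M, integral_dotProduct_sq_sphMeas,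
        sphMeas_real_univ, smul_eq_mul, mul_zero, add_zero]
      have h0 := sphereNorms_zero_sq A M
      linear_combination α * hFs + (2 * α + α * (α / (α + 2))) * hms +
        α * (α / (α + 2)) * hmF + (1 + (α + α / (α + 2) + α * (α / (α + 2))) / 3) * h0
    all_goals exact integrable_of_continuous_of_compactSpace (by fun_prop)
  · fun_prop
  · unfold energyForm
    fun_prop

theorem integral_crossForm_le (hM : Continuous M) (ha : Continuous a) :
    ∫ ω, crossForm (a ω) (M ω) ω.1 ∂sphMeas ≤
      √(∫ ω, a ω ⬝ᵥ a ω ∂sphMeas) *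
        (√(∫ ω, frobeniusNorm (M ω) ^ 2 ∂sphMeas) + √(∫ ω, (M ω).trace ^ 2 ∂sphMeas)) := by
  have hfrob := continuous_frobeniusNorm hM
  have hnorm : ∀ ω, √(a ω ⬝ᵥ a ω) ^ 2 = a ω ⬝ᵥ a ω := fun ω =>
    sq_sqrt (Finset.sum_nonneg fun i _ => mul_self_nonneg _)
  have ha' : Continuous fun ω => √(a ω ⬝ᵥ a ω) := by fun_prop
  have htrace := integral_abs_mul_abs_le_sqrt_mul_sqrt (memLp_two_sphMeas ha')
    (memLp_two_sphMeas hM.matrix_trace)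
  have hF := integral_abs_mul_abs_le_sqrt_mul_sqrt (memLp_two_sphMeas ha') (memLp_two_sphMeas hfrob)
  simp only [hnorm, abs_of_nonneg (sqrt_nonneg _), abs_of_nonneg (frobeniusNorm_nonneg _)]
    at htrace hF
  refine (integral_mono (integrable_of_continuous_of_compactSpace ?_)
    (integrable_of_continuous_of_compactSpace ?_)
    fun ω => crossForm_le (sphere_dotProduct_self ω) (a ω) (M ω)).trans ?_
  · unfold crossForm
    fun_prop
  · fun_prop
  rw [integral_add (integrable_of_continuous_of_compactSpace (by fun_prop))
    (integrable_of_continuous_of_compactSpace (by fun_prop)), mul_add, add_comm]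
  exact add_le_add hF htrace

theorem Bplus_form_sphereNorms_le (hα : 0 ≤ α) (hr : 0 ≤ r) (A : Fin 3 → ℝ)
    (hM : Continuous M) (ha : Continuous a)
    (hmean : ∀ i, ∫ ω, (M ω).vecMul ω.1 i ∂sphMeas = 0)
    (hpoincare : 2 * ∫ ω, a ω ⬝ᵥ a ω ∂sphMeas ≤
      r ^ 2 * ∫ ω, frobeniusNorm (M ω) ^ 2 ∂sphMeas) :
    r * ∑ i, ∑ j, sphereNorms A M i * Bplus α i j * sphereNorms A M j ≤
      r * (∫ ω, energyForm α (M ω + Matrix.vecMulVec ω.1 A) ω.1 ∂sphMeas) -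
        α / (α + 2) * ∫ ω, crossForm (a ω) (M ω) ω.1 ∂sphMeas := by
  have hnorm : √(∫ ω, a ω ⬝ᵥ a ω ∂sphMeas) ≤ r * sphereNorms A M 1 / √2 := by
    have hw := sphereNorms_nonneg A M 1
    refine sqrt_le_iff.2 ⟨by positivity, ?_⟩
    rw [div_pow, sq_sqrt zero_le_two, le_div_iff₀' two_pos, mul_pow, sphereNorms_one_sq]
    exact hpoincare
  have hcross : ∫ ω, crossForm (a ω) (M ω) ω.1 ∂sphMeas ≤
      r * sphereNorms A M 1 / √2 * (sphereNorms A M 1 + sphereNorms A M 2) :=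
    (integral_crossForm_le hM ha).trans (mul_le_mul_of_nonneg_right hnorm
      (add_nonneg (sphereNorms_nonneg A M 1) (sphereNorms_nonneg A M 2)))
  have henergy := le_integral_energyForm_add_vecMulVec hα A hM hmean
  have hβ : 0 ≤ α / (α + 2) := by positivity
  refine le_trans (le_of_eq ?_)
    (sub_le_sub (mul_le_mul_of_nonneg_left henergy hr) (mul_le_mul_of_nonneg_left hcross hβ))
  simp only [Fin.sum_univ_three, Bplus, Matrix.of_apply, Matrix.cons_val', Matrix.cons_val]
  field_simp
  ring

end SphereInequality

/-! ### The decomposition of a field into its spherical mean and fluctuation -/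

/-- The fluctuation `v` of a vector field `u` about its spherical means, taken componentwise. -/
def fluctuation (u : E3 → Fin 3 → ℝ) (x : E3) (i : Fin 3) : ℝ :=
  sphericalFluctuation (u · i) x

/-- The radial derivative `D_r ū` of the spherical mean of a vector field `u`. -/
def radialMeanDeriv (u : E3 → Fin 3 → ℝ) (r : ℝ) (i : Fin 3) : ℝ :=
  deriv (sphericalMean (u · i)) r

section Decomposition

variable {u : E3 → Fin 3 → ℝ} {x : E3} {r : ℝ}

lemma isSymbol_fluctuation (hu : ContDiff ℝ 1 u) (hs : HasCompactSupport u) (i : Fin 3) :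
    IsSymbol 1 (fluctuation u · i) :=
  isSymbol_sphericalFluctuation (contDiff_pi.1 hu i) (hs.comp_left (g := Function.eval i) rfl)

lemma hasCompactSupport_fluctuation (hs : HasCompactSupport u) :
    HasCompactSupport (fluctuation u) :=
  .intro (isCompact_iUnion fun i => hasCompactSupport_sphericalFluctuation (f := (u · i))
    (hs.comp_left (g := Function.eval i) rfl)) fun _ hx => funext fun i =>
      image_eq_zero_of_notMem_tsupport (f := sphericalFluctuation (u · i))
        fun hi => hx (Set.mem_iUnion.2 ⟨i, hi⟩)

lemma jacobian_eq_jacobian_fluctuation_add (hu : ContDiff ℝ 1 u) (hx : x ≠ 0) :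
    jacobian u x = jacobian (fluctuation u) x +
      Matrix.vecMulVec (direction x) (radialMeanDeriv u ‖x‖) := by
  ext k i
  have h := fderiv_sphericalFluctuation (contDiff_pi.1 hu i) hx (EuclideanSpace.single k 1)
  rw [EuclideanSpace.inner_single_right] at h
  simp only [jacobian, pd, fluctuation, radialMeanDeriv, direction, Matrix.add_apply,
    Matrix.of_apply, Matrix.vecMulVec_apply]
  simp only [conj_trivial, one_mul] at h
  linear_combination -h

lemma continuous_jacobian_fluctuation_smul (hu : ContDiff ℝ 1 u) (hs : HasCompactSupport u)
    (hr : 0 < r) : Continuous fun ω : sphere (0 : E3) 1 => jacobian (fluctuation u) (r • ω.1) :=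
  continuous_matrix fun k i => continuous_comp_smul_sphere
    (hasOrder_jacobian (isSymbol_fluctuation hu hs) k i).continuousOn hr.ne'

lemma continuous_fluctuation_smul (hu : ContDiff ℝ 1 u) (hs : HasCompactSupport u)
    (hr : 0 < r) : Continuous fun ω : sphere (0 : E3) 1 => fluctuation u (r • ω.1) :=
  continuous_pi fun i => continuous_comp_smul_sphere
    (isSymbol_fluctuation hu hs i).hasOrder.continuousOn hr.ne'

lemma integral_vecMul_jacobian_fluctuation (hu : ContDiff ℝ 1 u) (hr : 0 < r) (i : Fin 3) :
    ∫ ω : sphere (0 : E3) 1, (jacobian (fluctuation u) (r • ω.1)).vecMul ω.1 i ∂sphMeas = 0 := by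
  rw [← integral_fderiv_sphericalFluctuation (contDiff_pi.1 hu i) hr]
  exact integral_congr_ae (.of_forall fun ω => (fderiv_eq_sum_pd _ _ _).symm)

lemma frobeniusNorm_jacobian_sq (u : E3 → Fin 3 → ℝ) (x : E3) :
    frobeniusNorm (jacobian u x) ^ 2 = ∑ i, ∑ k, pd k (u · i) x ^ 2 := by
  rw [frobeniusNorm_sq, Finset.sum_comm]
  rfl

lemma integral_fluctuation_sq_le (hu : ContDiff ℝ 1 u) (hs : HasCompactSupport u) (hr : 0 < r) :
    2 * ∫ ω : sphere (0 : E3) 1, fluctuation u (r • ω.1) ⬝ᵥ fluctuation u (r • ω.1) ∂sphMeas ≤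
      r ^ 2 * ∫ ω : sphere (0 : E3) 1,
        frobeniusNorm (jacobian (fluctuation u) (r • ω.1)) ^ 2 ∂sphMeas := by
  have hv := continuous_fluctuation_smul hu hs hr
  have hJ := continuous_jacobian_fluctuation_smul hu hs hr
  have hint : ∀ i, Integrable (fun ω : sphere (0 : E3) 1 =>
      ∑ k, pd k (fluctuation u · i) (r • ω.1) ^ 2) sphMeas := fun i =>
    integrable_of_continuous_of_compactSpace
      (continuous_finsetSum _ fun k _ => (hJ.matrix_elem k i).pow 2)
  simp only [frobeniusNorm_jacobian_sq, dotProduct, ← sq]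
  rw [integral_finsetSum _ fun i _ => hint i, integral_finsetSum _ fun i _ =>
    integrable_of_continuous_of_compactSpace (by fun_prop), Finset.mul_sum, Finset.mul_sum]
  refine Finset.sum_le_sum fun i _ => ?_
  have h := integral_sphericalFluctuation_sq_le (contDiff_pi.1 hu i) hr
  simp only [norm_gradient_sq_eq_sum_pd_sq, finrank_euclideanSpace_fin] at h
  norm_num at h
  exact h

end Decomposition

/-! ### Integration in the radius -/

lemma integrable_mul_mul_of_integrable_mul_sq {X : Type*} [MeasurableSpace X] {μ : Measure X}
    {c f g : X → ℝ} (hc : ∀ᵐ x ∂μ, 0 ≤ c x) (hf0 : ∀ x, 0 ≤ f x) (hg0 : ∀ x, 0 ≤ g x)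
    (hf : Integrable (fun x => c x * f x ^ 2) μ) (hg : Integrable (fun x => c x * g x ^ 2) μ) :
    Integrable (fun x => c x * (f x * g x)) μ := by
  have hmemLp : ∀ {h : X → ℝ}, Integrable (fun x => c x * h x ^ 2) μ →
      MemLp (fun x => √(c x * h x ^ 2)) 2 μ := fun {h} hh =>
    (memLp_two_iff_integrable_sq
      (continuous_sqrt.comp_aestronglyMeasurable hh.aestronglyMeasurable)).2
      (hh.congr (hc.mono fun x hx => (sq_sqrt (mul_nonneg hx (sq_nonneg (h x)))).symm))
  refine ((hmemLp hf).integrable_mul (hmemLp hg)).congr (hc.mono fun x hx => ?_)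
  rw [Pi.mul_apply, sqrt_mul hx, sqrt_mul hx, sqrt_sq (hf0 x), sqrt_sq (hg0 x),
    mul_mul_mul_comm, mul_self_sqrt hx]

/-- The vector `w(r) = (‖D_r ū‖_ω, ‖Dv‖_ω, ‖div v‖_ω)` of the spherical-mean decomposition
`u = ū + v`. -/
def decompositionNorms (u : E3 → Fin 3 → ℝ) (r : ℝ) : Fin 3 → ℝ :=
  sphereNorms (radialMeanDeriv u r) fun ω => jacobian (fluctuation u) (r • ω.1)

section RadialIntegration

variable {α r : ℝ} {g : E3 → ℝ} {u : E3 → Fin 3 → ℝ}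

lemma integrableOn_mul_integral_sphMeas (hg : Integrable fun x => ‖x‖⁻¹ * g x) :
    IntegrableOn (fun r => r * ∫ ω : sphere (0 : E3) 1, g (r • ω.1) ∂sphMeas) (Set.Ioi 0) := by
  simpa only [sphMeas, finrank_euclideanSpace_fin, Nat.reduceSub, pow_one] using
    integrableOn_Ioi_integral_sphere_of_norm_inv_pow_mul (k := 1) (g := g) (by simp)
      (by simpa only [pow_one] using hg)

lemma integral_norm_inv_mul_eq (hg : Integrable fun x => ‖x‖⁻¹ * g x) :
    ∫ x, ‖x‖⁻¹ * g x =
      ∫ r in Set.Ioi (0 : ℝ), r * ∫ ω : sphere (0 : E3) 1, g (r • ω.1) ∂sphMeas := by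
  simpa only [sphMeas, finrank_euclideanSpace_fin, Nat.reduceSub, pow_one] using
    integral_norm_inv_pow_mul (k := 1) (g := g) (by simp)
      (by simpa only [pow_one] using hg)

lemma integrableOn_integral_sphMeas (hg : Integrable fun x => ‖x‖⁻¹ ^ 2 * g x) :
    IntegrableOn (fun r : ℝ => ∫ ω : sphere (0 : E3) 1, g (r • ω.1) ∂sphMeas) (Set.Ioi 0) := by
  simpa only [sphMeas, finrank_euclideanSpace_fin, Nat.reduceSub, pow_zero, one_mul] using
    integrableOn_Ioi_integral_sphere_of_norm_inv_pow_mul (by simp) hg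

lemma integral_norm_inv_sq_mul_eq (hg : Integrable fun x => ‖x‖⁻¹ ^ 2 * g x) :
    ∫ x, ‖x‖⁻¹ ^ 2 * g x =
      ∫ r in Set.Ioi (0 : ℝ), ∫ ω : sphere (0 : E3) 1, g (r • ω.1) ∂sphMeas := by
  simpa only [sphMeas, finrank_euclideanSpace_fin, Nat.reduceSub, pow_zero, one_mul] using
    integral_norm_inv_pow_mul (by simp) hg

lemma Bplus_form_decompositionNorms_le (hα : 0 ≤ α) (hu : ContDiff ℝ 1 u)
    (hs : HasCompactSupport u) (hr : 0 < r) :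
    r * ∑ i, ∑ j, decompositionNorms u r i * Bplus α i j * decompositionNorms u r j ≤
      r * (∫ ω : sphere (0 : E3) 1,
        energyForm α (jacobian u (r • ω.1)) (direction (r • ω.1)) ∂sphMeas) -
      α / (α + 2) * ∫ ω : sphere (0 : E3) 1, crossForm (fluctuation u (r • ω.1))
        (jacobian (fluctuation u) (r • ω.1)) (direction (r • ω.1)) ∂sphMeas := by
  have hdecomp : ∀ ω : sphere (0 : E3) 1, jacobian u (r • ω.1) =
      jacobian (fluctuation u) (r • ω.1) + Matrix.vecMulVec ω.1 (radialMeanDeriv u r) := fun ω => by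
    have hω : r • ω.1 ≠ 0 := smul_ne_zero hr.ne' (ne_zero_of_mem_unit_sphere ω)
    rw [jacobian_eq_jacobian_fluctuation_add hu hω, direction_smul hr, norm_smul,
      norm_eq_of_mem_sphere, mul_one, norm_of_nonneg hr.le]
  simp only [hdecomp, direction_smul hr]
  exact Bplus_form_sphereNorms_le hα hr.le (radialMeanDeriv u r)
    (continuous_jacobian_fluctuation_smul hu hs hr) (continuous_fluctuation_smul hu hs hr)
    (integral_vecMul_jacobian_fluctuation hu hr) (integral_fluctuation_sq_le hu hs hr)

lemma integrable_mul_dotProduct_radialMeanDeriv (hu : ContDiff ℝ 1 u)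
    (hs : HasCompactSupport u) :
    Integrable fun r => r * (radialMeanDeriv u r ⬝ᵥ radialMeanDeriv u r) := by
  have hcont : ∀ i, Continuous (radialMeanDeriv u · i) := fun i =>
    (contDiff_sphericalMean (contDiff_pi.1 hu i)).continuous_deriv le_rfl
  simp only [dotProduct, Finset.mul_sum]
  refine integrable_finsetSum _ fun i _ => Continuous.integrable_of_hasCompactSupport ?_ ?_
  · fun_prop
  · exact (((hasCompactSupport_sphericalMean
      (hs.comp_left (g := Function.eval i) rfl)).deriv).mul_left).mul_left

lemma integrableOn_mul_decompositionNorms_sq (hu : ContDiff ℝ 1 u) (hs : HasCompactSupport u)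
    (i : Fin 3) : IntegrableOn (fun r => r * decompositionNorms u r i ^ 2) (Set.Ioi 0) := by
  have hJ : ∀ k i, HasOrder 0 fun x => jacobian (fluctuation u) x k i :=
    hasOrder_jacobian (isSymbol_fluctuation hu hs)
  have hv := hasCompactSupport_fluctuation hs
  have hsq : ∀ {f : E3 → ℝ}, HasOrder 0 f → HasOrder 0 fun x => f x ^ 2 := fun hf => by
    simpa only [sq, add_zero] using hf.mul hf
  have hfrob : HasOrder 0 fun x => frobeniusNorm (jacobian (fluctuation u) x) ^ 2 := by
    simp only [frobeniusNorm_sq]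
    exact .sum fun k _ => .sum fun i _ => hsq (hJ k i)
  have htrace : HasOrder 0 fun x => (jacobian (fluctuation u) x).trace ^ 2 :=
    hsq (.sum fun k _ => hJ k k)
  match i with
  | 0 =>
    simp only [decompositionNorms, sphereNorms_zero_sq, mul_left_comm _ (4 * π)]
    exact (integrable_mul_dotProduct_radialMeanDeriv hu hs).integrableOn.const_mul (4 * π)
  | 1 =>
    simp only [decompositionNorms, sphereNorms_one_sq]
    exact integrableOn_mul_integral_sphMeas (hfrob.norm_inv_mul.integrable
      (hasCompactSupport_of_jacobian_eq_zero hv fun x _ h => by simp [h, frobeniusNorm]) (by simp))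
  | 2 =>
    simp only [decompositionNorms, sphereNorms_two_sq]
    exact integrableOn_mul_integral_sphMeas (htrace.norm_inv_mul.integrable
      (hasCompactSupport_of_jacobian_eq_zero hv fun x _ h => by simp [h]) (by simp))

lemma integrableOn_Bplus_form_decompositionNorms (α : ℝ) (hu : ContDiff ℝ 1 u)
    (hs : HasCompactSupport u) :
    IntegrableOn (fun r => r * ∑ i, ∑ j, decompositionNorms u r i * Bplus α i j *
      decompositionNorms u r j) (Set.Ioi 0) := by
  have hmul : ∀ i j, IntegrableOn
      (fun r => r * (decompositionNorms u r i * decompositionNorms u r j)) (Set.Ioi 0) :=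
    fun i j => integrable_mul_mul_of_integrable_mul_sq
      (ae_restrict_of_forall_mem measurableSet_Ioi fun r hr => le_of_lt hr)
      (fun r => sphereNorms_nonneg _ _ i) (fun r => sphereNorms_nonneg _ _ j)
      (integrableOn_mul_decompositionNorms_sq hu hs i)
      (integrableOn_mul_decompositionNorms_sq hu hs j)
  simp only [Finset.mul_sum]
  refine integrable_finsetSum _ fun i _ => integrable_finsetSum _ fun j _ =>
    ((hmul i j).const_mul (Bplus α i j)).congr (.of_forall fun r => ?_)
  ring

lemma integral_crossForm_eq_integral_crossForm_fluctuation (hu : ContDiff ℝ 1 u)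
    (hs : HasCompactSupport u) :
    ∫ x, ‖x‖⁻¹ ^ 2 * crossForm (u x) (jacobian u x) (direction x) =
      ∫ x, ‖x‖⁻¹ ^ 2 * crossForm (fluctuation u x) (jacobian (fluctuation u) x) (direction x) := by
  have hdrop : ∀ a : E3 → Fin 3 → ℝ,
      ∫ x, ‖x‖⁻¹ ^ 2 * crossForm (a x) (jacobian u x) (direction x) =
        ∫ x, ‖x‖⁻¹ ^ 2 * crossForm (a x) (jacobian (fluctuation u) x) (direction x) := fun a =>
    integral_congr_ae ((Measure.ae_ne volume 0).mono fun x hx => by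
      simp only [jacobian_eq_jacobian_fluctuation_add hu hx, crossForm_add_vecMulVec])
  rw [hdrop, integral_crossForm_comm (isSymbol_component hu hs) (isSymbol_fluctuation hu hs) hs
    (by norm_num), hdrop]

theorem integral_Bplus_form_decompositionNorms_le (hα : 0 ≤ α) (hu : ContDiff ℝ 1 u)
    (hs : HasCompactSupport u) :
    ∫ r in Set.Ioi (0 : ℝ), r * ∑ i, ∑ j, decompositionNorms u r i * Bplus α i j *
        decompositionNorms u r j ≤
      (∫ x, ‖x‖⁻¹ * energyForm α (jacobian u x) (direction x)) -
        α / (α + 2) * ∫ x, ‖x‖⁻¹ ^ 2 * crossForm (u x) (jacobian u x) (direction x) := by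
  have henergy := integrable_norm_inv_mul_energyForm α hs (hasOrder_jacobian_of_contDiff hu hs)
  have hcross := integrable_norm_inv_sq_mul_crossForm (hasCompactSupport_fluctuation hs)
    (fun i => (isSymbol_fluctuation hu hs i).hasOrder)
    (hasOrder_jacobian (isSymbol_fluctuation hu hs)) (by norm_num)
  rw [integral_crossForm_eq_integral_crossForm_fluctuation hu hs,
    integral_norm_inv_mul_eq henergy, integral_norm_inv_sq_mul_eq hcross]
  have henergy' := integrableOn_mul_integral_sphMeas henergy
  have hcross' := (integrableOn_integral_sphMeas hcross).const_mul (α / (α + 2))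
  rw [← integral_const_mul, ← integral_sub henergy' hcross']
  exact setIntegral_mono_on (integrableOn_Bplus_form_decompositionNorms α hu hs)
    (henergy'.sub hcross') measurableSet_Ioi
    fun r hr => Bplus_form_decompositionNorms_le hα hu hs hr

end RadialIntegration

lemma sphericalMean_eq (f : E3 → ℝ) (r : ℝ) :
    sphericalMean f r = 1 / (4 * π) * sphInt f r := by
  rw [sphericalMean, average_eq, ← sphMeas, sphMeas_real_univ, smul_eq_mul, one_div]
  rfl

lemma IsSphericalMeanDecomp.eq_sphericalMean {u v : E3 → Fin 3 → ℝ} {ub : Fin 3 → ℝ → ℝ}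
    (h : IsSphericalMeanDecomp u ub v) (i : Fin 3) : ub i = sphericalMean (u · i) :=
  funext fun r => by rw [h.1, sphericalMean_eq]

lemma IsSphericalMeanDecomp.eq_fluctuation {u v : E3 → Fin 3 → ℝ} {ub : Fin 3 → ℝ → ℝ}
    (h : IsSphericalMeanDecomp u ub v) : v = fluctuation u := by
  funext x i
  rw [fluctuation, sphericalFluctuation, ← h.eq_sphericalMean, h.2, add_sub_cancel_left]

lemma IsSphericalMeanDecomp.eq_decompositionNorms {u v : E3 → Fin 3 → ℝ} {ub : Fin 3 → ℝ → ℝ}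
    (h : IsSphericalMeanDecomp u ub v) {w : ℝ → Fin 3 → ℝ}
    (hw0 : ∀ r, w r 0 = √(4 * π * ∑ i, deriv (ub i) r ^ 2))
    (hw1 : ∀ r, w r 1 = √(sphInt (fun x => ∑ i, ∑ k, pd k (fun z => v z i) x ^ 2) r))
    (hw2 : ∀ r, w r 2 = √(sphInt (fun x => divg v x ^ 2) r)) :
    w = decompositionNorms u := by
  funext r i
  match i with
  | 0 =>
    simp only [hw0, h.eq_sphericalMean, sq]
    rfl
  | 1 =>
    simp only [hw1, h.eq_fluctuation, ← frobeniusNorm_jacobian_sq]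
    rfl
  | 2 =>
    rw [hw2, h.eq_fluctuation]
    rfl

lemma cA_nonneg {α : ℝ} (hα : 0 ≤ α) : 0 ≤ cA α := by
  unfold cA
  positivity

lemma cA_mul {α : ℝ} (hα : α + 1 ≠ 0) (hα' : α + 2 ≠ 0) :
    cA α * (2 * π * (1 + α / (α + 2))) = 1 / 2 := by
  unfold cA
  field_simp
  ring

theorem lame_energy_lower_bound_Bplus_general (α : ℝ) (hα : 0 ≤ α) (u : E3 → Fin 3 → ℝ)
    (hu : ContDiff ℝ 2 u) (hs : HasCompactSupport u) (ub : Fin 3 → ℝ → ℝ) (v : E3 → Fin 3 → ℝ)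
    (hdec : IsSphericalMeanDecomp u ub v) (w : ℝ → Fin 3 → ℝ)
    (hw0 : ∀ r, w r 0 = √(4 * π * ∑ i, deriv (ub i) r ^ 2))
    (hw1 : ∀ r, w r 1 = √(sphInt (fun x => ∑ i, ∑ k, pd k (fun z => v z i) x ^ 2) r))
    (hw2 : ∀ r, w r 2 = √(sphInt (fun x => divg v x ^ 2) r)) :
    1 / 2 * ∑ i, u 0 i ^ 2 +
        cA α * ∫ r in Set.Ioi (0 : ℝ), r * ∑ i, ∑ j, w r i * Bplus α i j * w r j ≤
      ∫ x : E3, ∑ i, ∑ j, lame α u x i * Phi α x i j * u x j := by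
  have hu' : ContDiff ℝ 1 u := hu.of_le one_le_two
  rw [hdec.eq_decompositionNorms hw0 hw1 hw2, integral_lame_mul_potential hu hs (by positivity),
    integral_norm_inv_sq_mul_radialForm α hu' hs]
  have hform := mul_le_mul_of_nonneg_left
    (integral_Bplus_form_decompositionNorms_le hα hu' hs) (cA_nonneg hα)
  have hconst := cA_mul (α := α) (by positivity) (by positivity)
  have hsq : u 0 ⬝ᵥ u 0 = ∑ i, u 0 i ^ 2 := by simp only [dotProduct, sq]
  rw [hsq]
  linear_combination hform - (∑ i, u 0 i ^ 2) * hconst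

/-- For `α ≥ 0`, the lower bound
`∫ (Lu)·(Φu) dx ≥ (1/2)|u(0)|² + c_α ∫₀^∞ r (wᵀ B₊ w) dr`, where
`w = (‖D_r ū‖_ω, ‖Dv‖_ω, ‖div v‖_ω)`. -/
theorem lame_energy_lower_bound_Bplus
    (α : ℝ) (hα : 0 ≤ α)
    (u : E3 → Fin 3 → ℝ) (hu : IsTestOn Set.univ u)
    (ub : Fin 3 → ℝ → ℝ) (v : E3 → Fin 3 → ℝ)
    (hdec : IsSphericalMeanDecomp u ub v)
    (w : ℝ → Fin 3 → ℝ)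
    (hw0 : ∀ r, w r 0 = Real.sqrt (4 * Real.pi * ∑ i, (deriv (ub i) r) ^ 2))
    (hw1 : ∀ r, w r 1 =
      Real.sqrt (sphInt (fun x => ∑ i, ∑ k, (pd k (fun z => v z i) x) ^ 2) r))
    (hw2 : ∀ r, w r 2 = Real.sqrt (sphInt (fun x => (divg v x) ^ 2) r)) :
    (1 / 2) * (∑ i, (u 0 i) ^ 2) +
        cA α * ∫ r in Set.Ioi (0 : ℝ), r * ∑ i, ∑ j, w r i * Bplus α i j * w r j ≤
      ∫ x : E3, ∑ i, ∑ j, lame α u x i * Phi α x i j * u x j :=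
  lame_energy_lower_bound_Bplus_general α hα u (hu.1.of_le (by norm_cast)) hu.2.1 ub
    v hdec w hw0 hw1 hw2
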